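/- arXiv:1209.3577 — 10 statements merged into one kernel-verified Lean document; each statement's English description precedes it below -/
import Mathlib

section
/- For every real number x ≥ 1, the partial sum m(x) = ∑_{n ≤ x} μ(n)/n satisfies −1 ≤ m(x) ≤ 1. -/
theorem gram_aux (N : ℕ) (hN : 1 ≤ N) :
    ∑ n ∈ Finset.Icc 1 N, (ArithmeticFunction.moebius n : ℝ) * ((N / n : ℕ) : ℝ) = 1 := by
  have h := ArithmeticFunction.sum_Ioc_mul_zeta_eq_sum ArithmeticFunction.moebius N
  rw [ArithmeticFunction.moebius_mul_coe_zeta] at h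
  have h1 : ∑ n ∈ Finset.Ioc 0 N, (1 : ArithmeticFunction ℤ) n = 1 := by
    rw [Finset.sum_eq_single 1]
    · simp
    · intro b _ hb
      exact ArithmeticFunction.one_apply_ne hb
    · intro hb
      exact absurd (Finset.mem_Ioc.2 ⟨Nat.one_pos, hN⟩) hb
  rw [h1] at h
  have h2 : Finset.Icc 1 N = Finset.Ioc 0 N := by
    ext a
    simp only [Finset.mem_Icc, Finset.mem_Ioc]
    omega
  rw [h2]
  have h3 := congrArg (fun z : ℤ => (z : ℝ)) h
  push_cast at h3
  exact h3.symm

theorem gram_term (N n : ℕ) (hn : 1 ≤ n) :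
    |(N : ℝ) * ((ArithmeticFunction.moebius n : ℝ) / n)
      - (ArithmeticFunction.moebius n : ℝ) * ((N / n : ℕ) : ℝ)| ≤ if n = 1 then 0 else 1 := by
  split_ifs with h1
  · subst h1
    simp
  · have hn' : (0 : ℝ) < n := by exact_mod_cast hn
    have e : (N : ℝ) * ((ArithmeticFunction.moebius n : ℝ) / n)
        - (ArithmeticFunction.moebius n : ℝ) * ((N / n : ℕ) : ℝ)
        = (ArithmeticFunction.moebius n : ℝ) * ((N : ℝ) / n - ((N / n : ℕ) : ℝ)) := by ring
    rw [e, abs_mul]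
    have hm : |(ArithmeticFunction.moebius n : ℝ)| ≤ 1 := by
      exact_mod_cast ArithmeticFunction.abs_moebius_le_one (n := n)
    have hf : |(N : ℝ) / n - ((N / n : ℕ) : ℝ)| ≤ 1 := by
      rw [← Nat.floor_div_eq_div (K := ℝ), abs_le]
      have a := Nat.floor_le (a := (N : ℝ) / n) (by positivity)
      have b := Nat.lt_floor_add_one ((N : ℝ) / n)
      constructor <;> linarith
    exact mul_le_one₀ hm (abs_nonneg _) hf

/-- **Gram's inequality** (1884): for every real `x ≥ 1`,
`-1 ≤ ∑_{n ≤ x} μ(n)/n ≤ 1`. -/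
theorem gram_inequality (x : ℝ) (hx : 1 ≤ x) :
    -1 ≤ ∑ n ∈ Finset.Icc 1 ⌊x⌋₊, (ArithmeticFunction.moebius n : ℝ) / n ∧
    ∑ n ∈ Finset.Icc 1 ⌊x⌋₊, (ArithmeticFunction.moebius n : ℝ) / n ≤ 1 := by
  have hN : 1 ≤ ⌊x⌋₊ := Nat.le_floor (by simpa using hx)
  generalize ⌊x⌋₊ = N at hN
  have hN' : (1 : ℝ) ≤ N := by exact_mod_cast hN
  have key : |(N : ℝ) * ∑ n ∈ Finset.Icc 1 N, (ArithmeticFunction.moebius n : ℝ) / n - 1|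
      ≤ (N : ℝ) - 1 := by
    calc _ = |∑ n ∈ Finset.Icc 1 N, ((N : ℝ) * ((ArithmeticFunction.moebius n : ℝ) / n)
            - (ArithmeticFunction.moebius n : ℝ) * ((N / n : ℕ) : ℝ))| := by
          rw [Finset.sum_sub_distrib, gram_aux N hN, Finset.mul_sum]
      _ ≤ ∑ n ∈ Finset.Icc 1 N, (if n = 1 then (0 : ℝ) else 1) :=
          (Finset.abs_sum_le_sum_abs _ _).trans
            (Finset.sum_le_sum fun n hn => gram_term N n (Finset.mem_Icc.1 hn).1)
      _ = ∑ n ∈ Finset.Icc 1 N, ((1 : ℝ) - if n = 1 then 1 else 0) := by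
          refine Finset.sum_congr rfl fun n _ => ?_
          split_ifs <;> norm_num
      _ = (N : ℝ) - 1 := by
          rw [Finset.sum_sub_distrib, Finset.sum_ite_eq' , if_pos (Finset.mem_Icc.2 ⟨le_rfl, hN⟩)]
          simp
  generalize (∑ n ∈ Finset.Icc 1 N, (ArithmeticFunction.moebius n : ℝ) / n) = S at key
  rw [abs_le] at key
  constructor <;> nlinarith
end

section
/- For every positive integer k and every real number x ≥ 1, one has ∑_{n ≤ x} μ(n) φ_k(x/n) = k (1 − 1/x)^{k−1}, where the sum is over positive integers n ≤ x. -/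
/-- The `k`-th Bernoulli polynomial, evaluated at a real number. -/
noncomputable def bernPoly (k : ℕ) (x : ℝ) : ℝ :=
  Polynomial.aeval x (Polynomial.bernoulli k)

/-- `B_k(x) = b_k({x})`, the periodized Bernoulli polynomial. -/
noncomputable def bernPer (k : ℕ) (x : ℝ) : ℝ := bernPoly k (Int.fract x)

/-- `φ_k(x) = (b_k(x) - B_k(x)) / x^(k-1)`. -/
noncomputable def phiFun (k : ℕ) (x : ℝ) : ℝ := (bernPoly k x - bernPer k x) / x ^ (k - 1)

theorem bernPoly_one_add (k : ℕ) (t : ℝ) :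
    bernPoly k (1 + t) = bernPoly k t + k * t ^ (k - 1) := by
  have h := congrArg (Polynomial.aeval t) (Polynomial.bernoulli_comp_one_add_X k)
  rw [Polynomial.aeval_comp] at h
  simpa [bernPoly] using h

theorem bernPoly_sub_nat (k : ℕ) (y : ℝ) (N : ℕ) :
    bernPoly k y - bernPoly k (y - N) = k * ∑ m ∈ Finset.Icc 1 N, (y - m) ^ (k - 1) := by
  induction N with
  | zero => simp
  | succ N ih =>
    rw [Finset.sum_Icc_succ_top (by omega), mul_add, ← ih]
    have h := bernPoly_one_add k (y - (N + 1 : ℕ))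
    have e : 1 + (y - (N + 1 : ℕ)) = y - N := by push_cast; ring
    rw [e] at h
    linarith

theorem phiFun_eq (k : ℕ) (y : ℝ) (hy : 0 < y) :
    phiFun k y = k * ∑ m ∈ Finset.Icc 1 ⌊y⌋₊, (1 - m / y) ^ (k - 1) := by
  have hf : Int.fract y = y - (⌊y⌋₊ : ℝ) := by
    rw [natCast_floor_eq_intCast_floor hy.le]; rfl
  unfold phiFun bernPer
  rw [hf, bernPoly_sub_nat, mul_div_assoc, Finset.sum_div]
  congr 1
  refine Finset.sum_congr rfl fun m _ => ?_
  rw [← div_pow]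
  congr 1
  field_simp

theorem moebius_double_sum (N : ℕ) (hN : 1 ≤ N) (f : ℕ → ℝ) :
    ∑ n ∈ Finset.Icc 1 N, (ArithmeticFunction.moebius n : ℝ) *
      ∑ m ∈ Finset.Icc 1 (N / n), f (m * n) = f 1 := by
  have h1 : ∑ n ∈ Finset.Icc 1 N, (ArithmeticFunction.moebius n : ℝ) *
      ∑ m ∈ Finset.Icc 1 (N / n), f (m * n)
      = ∑ l ∈ Finset.Icc 1 N, ∑ n ∈ l.divisors, (ArithmeticFunction.moebius n : ℝ) * f l := by
    simp_rw [Finset.mul_sum]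
    rw [Finset.sum_sigma', Finset.sum_sigma']
    refine Finset.sum_bij' (fun p _ => ⟨p.2 * p.1, p.1⟩) (fun p _ => ⟨p.2, p.1 / p.2⟩)
      ?_ ?_ ?_ ?_ ?_
    · rintro ⟨n, m⟩ h
      simp only [Finset.mem_sigma, Finset.mem_Icc, Nat.mem_divisors] at h ⊢
      obtain ⟨⟨hn, -⟩, hm, hmn⟩ := h
      have := (Nat.le_div_iff_mul_le hn).1 hmn
      have : 0 < m * n := Nat.mul_pos hm hn
      exact ⟨⟨by omega, by omega⟩, Dvd.intro_left _ rfl, by omega⟩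
    · rintro ⟨l, n⟩ h
      simp only [Finset.mem_sigma, Finset.mem_Icc, Nat.mem_divisors] at h ⊢
      obtain ⟨⟨hl, hlN⟩, hd, -⟩ := h
      have hn := Nat.pos_of_dvd_of_pos hd hl
      have hle := Nat.le_of_dvd hl hd
      exact ⟨⟨hn, by omega⟩, Nat.div_pos hle hn, Nat.div_le_div_right hlN⟩
    · rintro ⟨n, m⟩ h
      simp only [Finset.mem_sigma, Finset.mem_Icc] at h
      simp [Nat.mul_div_cancel _ h.1.1]
    · rintro ⟨l, n⟩ h
      simp only [Finset.mem_sigma, Nat.mem_divisors] at h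
      simp [Nat.div_mul_cancel h.2.1]
    · rintro ⟨n, m⟩ h
      rfl
  rw [h1]
  have h2 : ∀ l : ℕ, ∑ n ∈ l.divisors, (ArithmeticFunction.moebius n : ℝ)
      = if l = 1 then 1 else 0 := by
    intro l
    have := congrArg (fun g : ArithmeticFunction ℤ => ((g l : ℤ) : ℝ))
      ArithmeticFunction.moebius_mul_coe_zeta
    simp only [ArithmeticFunction.coe_mul_zeta_apply, ArithmeticFunction.one_apply] at this
    push_cast at this
    exact this
  simp_rw [← Finset.sum_mul, h2]
  simp [hN]

/-- **MacLeod's identity** (1994): for every positive integer `k` and real `x ≥ 1`,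
`∑_{n ≤ x} μ(n) φ_k(x/n) = k (1 - 1/x)^(k-1)`. -/
theorem macleod_identity (k : ℕ) (hk : 1 ≤ k) (x : ℝ) (hx : 1 ≤ x) :
    ∑ n ∈ Finset.Icc 1 ⌊x⌋₊, (ArithmeticFunction.moebius n : ℝ) * phiFun k (x / n)
      = k * (1 - 1 / x) ^ (k - 1) := by
  have hN : 1 ≤ ⌊x⌋₊ := Nat.le_floor (by simpa using hx)
  have h := moebius_double_sum ⌊x⌋₊ hN (fun l => (k : ℝ) * (1 - (l : ℝ) / x) ^ (k - 1))
  simp only [Nat.cast_one] at h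
  rw [← h]
  refine Finset.sum_congr rfl fun n hn => ?_
  have hn1 : (0 : ℝ) < n := by exact_mod_cast (Finset.mem_Icc.1 hn).1
  rw [phiFun_eq k _ (by positivity), Nat.floor_div_natCast, Finset.mul_sum]
  congr 1
  refine Finset.sum_congr rfl fun m _ => ?_
  rw [div_div_eq_mul_div]
  push_cast
  rfl
end

section
/- For every positive integer k, one has ∫_1^∞ B_k(t) t^{−(k+1)} dt = 1 + ∑_{j=1}^{k} B_j/j − γ, where γ is the Euler–Mascheroni constant. -/
open MeasureTheory Filter Topology Set

lemma bernPer_eq (k : ℕ) (x : ℝ) : bernPer k x = bernoulliFun k (Int.fract x) := by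
  simp [bernPer, bernPoly, bernoulliFun, Polynomial.aeval_def, Polynomial.eval_map]

lemma bernPer_integrable (k : ℕ) (hk : 1 ≤ k) :
    IntegrableOn (fun t : ℝ => bernPer k t / t ^ (k + 1)) (Ioi 1) := by
  obtain ⟨C, hC⟩ := (isCompact_Icc (a := (0 : ℝ)) (b := 1)).exists_bound_of_continuousOn
    (continuous_bernoulliFun k).continuousOn
  have h1 : IntegrableOn (fun t : ℝ => C * t ^ (-((k : ℝ) + 1))) (Ioi 1) := by
    apply Integrable.const_mul
    have : (1 : ℝ) ≤ k := by exact_mod_cast hk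
    exact integrableOn_Ioi_rpow_of_lt (by linarith) one_pos
  refine Integrable.mono' h1 ?_ ?_
  · apply Measurable.aestronglyMeasurable
    simp only [bernPer_eq]
    exact ((continuous_bernoulliFun k).measurable.comp measurable_fract).div (by fun_prop)
  · filter_upwards [ae_restrict_mem measurableSet_Ioi] with t ht
    have ht0 : (0 : ℝ) < t := lt_trans one_pos ht
    have h2 := hC (Int.fract t) ⟨Int.fract_nonneg t, (Int.fract_lt_one t).le⟩
    rw [norm_div, bernPer_eq, Real.rpow_neg ht0.le, div_eq_mul_inv]
    have : ‖t ^ (k + 1)‖ = t ^ ((k : ℝ) + 1) := by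
      rw [Real.norm_of_nonneg (by positivity)]
      exact_mod_cast (Real.rpow_natCast t (k + 1)).symm
    rw [this]
    gcongr

/-- The piece of the integral on one unit interval. -/
noncomputable def pieceJ (k n : ℕ) : ℝ :=
  ∫ t in ((n : ℝ) + 1)..((n : ℝ) + 2), bernoulliFun k (t - (n + 1)) / t ^ (k + 1)

lemma pieceJ_eq (k n : ℕ) :
    ∫ t in ((n : ℝ) + 1)..((n : ℝ) + 2), bernPer k t / t ^ (k + 1) = pieceJ k n := by
  unfold pieceJ
  rw [intervalIntegral.integral_of_le (by linarith), intervalIntegral.integral_of_le (by linarith),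
    integral_Ioc_eq_integral_Ioo, integral_Ioc_eq_integral_Ioo]
  apply setIntegral_congr_fun measurableSet_Ioo
  intro t ht
  have : ⌊t⌋ = (n : ℤ) + 1 := by
    rw [Int.floor_eq_iff]
    push_cast
    exact ⟨ht.1.le, by linarith [ht.2]⟩
  simp only [bernPer_eq, Int.fract, this]
  push_cast
  rfl

lemma pieceJ_zero (n : ℕ) : pieceJ 0 n = Real.log (n + 2) - Real.log (n + 1) := by
  unfold pieceJ
  simp only [bernoulliFun_zero, zero_add, pow_one]
  rw [integral_one_div_of_pos (by positivity) (by positivity),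
    Real.log_div (by positivity) (by positivity)]

lemma pieceJ_succ (k n : ℕ) :
    pieceJ (k + 1) n = pieceJ k n - (bernoulliFun (k + 1) 1 / ((n : ℝ) + 2) ^ (k + 1)
      - bernoulliFun (k + 1) 0 / ((n : ℝ) + 1) ^ (k + 1)) / (k + 1) := by
  have hpos : ∀ t ∈ uIcc ((n : ℝ) + 1) ((n : ℝ) + 2), t ≠ 0 := by
    intro t ht
    rw [uIcc_of_le (by linarith)] at ht
    have : (0 : ℝ) < (n : ℝ) + 1 := by positivity
    exact (lt_of_lt_of_le this ht.1).ne'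
  have hint : ∀ j : ℕ, IntervalIntegrable
      (fun t : ℝ => bernoulliFun j (t - (n + 1)) / t ^ (j + 1)) volume (n + 1) (n + 2) := by
    intro j
    apply ContinuousOn.intervalIntegrable
    apply ContinuousOn.div
    · exact ((continuous_bernoulliFun j).comp (continuous_id.sub continuous_const)).continuousOn
    · fun_prop
    · intro t ht
      exact pow_ne_zero _ (hpos t ht)
  have hk : ((k : ℝ) + 1) ≠ 0 := by positivity
  have h := intervalIntegral.integral_eq_sub_of_hasDerivAt
    (f := fun t : ℝ => bernoulliFun (k + 1) (t - (n + 1)) / t ^ (k + 1) / (k + 1))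
    (f' := fun t : ℝ => bernoulliFun k (t - (n + 1)) / t ^ (k + 1)
      - bernoulliFun (k + 1) (t - (n + 1)) / t ^ (k + 1 + 1))
    (a := (n : ℝ) + 1) (b := n + 2) ?_ ((hint k).sub (hint (k + 1)))
  · rw [intervalIntegral.integral_sub (hint k) (hint (k + 1))] at h
    change pieceJ k n - pieceJ (k + 1) n = _ at h
    have e1 : (n : ℝ) + 2 - (n + 1) = 1 := by ring
    simp only [e1, sub_self] at h
    rw [sub_div]
    linarith
  · intro t ht
    have ht0 := hpos t ht
    have d1 := (hasDerivAt_bernoulliFun (k + 1) (t - (n + 1))).comp t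
      ((hasDerivAt_id t).sub_const ((n : ℝ) + 1))
    have d2 := (d1.div (hasDerivAt_pow (k + 1) t) (pow_ne_zero _ ht0)).div_const ((k : ℝ) + 1)
    refine d2.congr_deriv ?_
    simp only [Nat.add_sub_cancel, Function.comp, id]
    push_cast
    field_simp
    try ring

lemma sum_pieceJ (k : ℕ) (hk : 1 ≤ k) (N : ℕ) :
    ∫ t in (1 : ℝ)..((N : ℝ) + 1), bernPer k t / t ^ (k + 1)
      = ∑ n ∈ Finset.range N, pieceJ k n := by
  have hint : ∀ a b : ℝ, 1 ≤ a → a ≤ b →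
      IntervalIntegrable (fun t : ℝ => bernPer k t / t ^ (k + 1)) volume a b := by
    intro a b ha hab
    rw [intervalIntegrable_iff_integrableOn_Ioc_of_le hab]
    exact (bernPer_integrable k hk).mono_set (fun x hx => lt_of_le_of_lt ha hx.1)
  induction N with
  | zero => simp
  | succ N ih =>
    have h0 : (0 : ℝ) ≤ N := by positivity
    rw [Finset.sum_range_succ, ← ih, ← pieceJ_eq]
    push_cast
    rw [intervalIntegral.integral_add_adjacent_intervals (hint _ _ le_rfl (by linarith))
      (hint _ _ (by linarith) (by linarith))]
    congr 1
    ring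

lemma tendsto_sum (k : ℕ) (hk : 1 ≤ k) :
    Tendsto (fun N : ℕ => ∑ n ∈ Finset.range N, pieceJ k n) atTop
      (𝓝 (1 + (∑ j ∈ Finset.Icc 1 k, (bernoulli j : ℝ) / j) - Real.eulerMascheroniConstant)) := by
  have hinv : Tendsto (fun N : ℕ => ((N : ℝ) + 1)⁻¹) atTop (𝓝 0) := by
    simpa using tendsto_one_div_add_atTop_nhds_zero_nat (𝕜 := ℝ)
  induction k, hk using Nat.le_induction with
  | base =>
    have h1 : ∀ N : ℕ, ∑ n ∈ Finset.range N, pieceJ 1 n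
        = 1 / 2 - Real.eulerMascheroniSeq N + (1 / 2 * ((N : ℝ) + 1)⁻¹ - ((N : ℝ) + 1)⁻¹) := by
      intro N
      induction N with
      | zero => simp [Real.eulerMascheroniSeq]; try norm_num
      | succ N ih =>
        have := pieceJ_succ 0 N
        simp only [zero_add, pieceJ_zero, bernoulliFun_one] at this
        rw [Finset.sum_range_succ, ih, this]
        simp only [Real.eulerMascheroniSeq, harmonic_succ]
        push_cast
        have e : (N : ℝ) + 1 + 1 = N + 2 := by ring
        rw [e]
        have : (N : ℝ) + 1 ≠ 0 := by positivity
        have : (N : ℝ) + 2 ≠ 0 := by positivity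
        field_simp
        ring
    simp only [h1]
    have := ((tendsto_const_nhds (x := (1 / 2 : ℝ))).sub
      Real.tendsto_eulerMascheroniSeq).add ((hinv.const_mul (1 / 2)).sub hinv)
    convert this using 2
    simp [bernoulli_one]
    try ring
  | succ k hk ih =>
    have h1 : ∀ N : ℕ, ∑ n ∈ Finset.range N, pieceJ (k + 1) n
        = ∑ n ∈ Finset.range N, pieceJ k n
          - (bernoulli (k + 1) : ℝ) / (k + 1) * ((((N : ℝ) + 1)⁻¹) ^ (k + 1) - 1) := by
      intro N
      induction N with
      | zero => simp
      | succ N ih =>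
        have hne : k + 1 ≠ 1 := by omega
        have := pieceJ_succ k N
        rw [bernoulliFun_endpoints_eq_of_ne_one hne, bernoulliFun_eval_zero] at this
        rw [Finset.sum_range_succ, Finset.sum_range_succ, ih, this]
        push_cast
        have e : (N : ℝ) + 1 + 1 = N + 2 := by ring
        rw [e, inv_pow, inv_pow]
        ring
    simp only [h1]
    have := ih.sub (((hinv.pow (k + 1)).sub_const 1).const_mul ((bernoulli (k + 1) : ℝ) / (k + 1)))
    convert this using 2
    rw [Finset.sum_Icc_succ_top (by omega)]
    push_cast
    rw [zero_pow (by omega)]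
    ring

/-- For every positive integer `k`,
`∫_1^∞ B_k(t) t^{-(k+1)} dt = 1 + ∑_{j=1}^k B_j / j - γ`,
where `γ` is the Euler–Mascheroni constant. -/
theorem integral_bernPer (k : ℕ) (hk : 1 ≤ k) :
    ∫ t in Set.Ioi (1 : ℝ), bernPer k t / t ^ (k + 1)
      = 1 + (∑ j ∈ Finset.Icc 1 k, (bernoulli j : ℝ) / j) - Real.eulerMascheroniConstant := by
  have h1 := intervalIntegral_tendsto_integral_Ioi (1 : ℝ) (bernPer_integrable k hk)
    (tendsto_atTop_add_const_right atTop (1 : ℝ) (tendsto_natCast_atTop_atTop (R := ℝ)))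
  simp only [sum_pieceJ k hk] at h1
  exact tendsto_nhds_unique h1 (tendsto_sum k hk)
end

section
/- For every real number x ≥ 1, one has |m₁(x)| ≤ (1/x) ∫_1^x |M(t)|/t dt + 2/x − 2/x². -/
/-- `M(x) = ∑_{n ≤ x} μ(n)`. -/
noncomputable def Mobius_M (x : ℝ) : ℝ :=
  ∑ n ∈ Finset.Icc 1 ⌊x⌋₊, (ArithmeticFunction.moebius n : ℝ)

/-- `m₁(x) = ∑_{n ≤ x} μ(n) (1/n - 1/x)`. -/
noncomputable def Mobius_m1 (x : ℝ) : ℝ :=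
  ∑ n ∈ Finset.Icc 1 ⌊x⌋₊, (ArithmeticFunction.moebius n : ℝ) * (1 / n - 1 / x)

open MeasureTheory in
theorem ind_int (x : ℝ) (s : Set ℝ) (hs : MeasurableSet s) (f : ℝ → ℝ)
    (hf : ContinuousOn f (Set.Icc 1 x)) (hx : 1 ≤ x) :
    IntervalIntegrable (s.indicator f) volume 1 x := by
  rw [intervalIntegrable_iff_integrableOn_Ioc_of_le hx]
  exact ((hf.integrableOn_Icc).mono_set Set.Ioc_subset_Icc_self).indicator hs

open MeasureTheory in
/-- Integral of an indicator of a closed subinterval. -/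
theorem ind_eval (x a b : ℝ) (h1 : 1 ≤ a) (hab : a ≤ b) (hb : b ≤ x) (f : ℝ → ℝ) :
    ∫ t in (1:ℝ)..x, (Set.Icc a b).indicator f t = ∫ t in a..b, f t := by
  rw [intervalIntegral.integral_of_le (by linarith), intervalIntegral.integral_of_le hab,
    ← integral_Icc_eq_integral_Ioc, setIntegral_indicator measurableSet_Icc,
    Set.inter_eq_self_of_subset_right (Set.Icc_subset_Icc h1 hb), integral_Icc_eq_integral_Ioc]

/-- The Möbius sum over divisors, indicator form. -/
theorem mob_div (k : ℕ) (hk : 1 ≤ k) :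
    ∑ d ∈ k.divisors, (ArithmeticFunction.moebius d : ℝ) = if k = 1 then 1 else 0 := by
  have h := congrArg (fun f : ArithmeticFunction ℤ => f k)
    ArithmeticFunction.coe_zeta_mul_moebius
  simp only [ArithmeticFunction.coe_zeta_mul_apply, ArithmeticFunction.one_apply] at h
  exact_mod_cast h

theorem mob_inner_sum (x : ℝ) (hx : 1 ≤ x) (m : ℕ) (hm : 1 ≤ m) :
    ∑ n ∈ Finset.Icc 1 ⌊x⌋₊, (if (m:ℝ) * n ≤ x then x - m * n else 0)
      = ∑ k ∈ Finset.Icc 1 ⌊x⌋₊, if m ∣ k then x - (k:ℝ) else 0 := by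
  rw [← Finset.sum_filter, ← Finset.sum_filter]
  refine Finset.sum_bij (fun n _ => m * n) ?_ ?_ ?_ ?_
  · intro n hn
    simp only [Finset.mem_filter, Finset.mem_Icc] at hn ⊢
    refine ⟨⟨Nat.mul_pos hm hn.1.1, Nat.le_floor (by push_cast; exact hn.2)⟩, dvd_mul_right _ _⟩
  · intro a _ b _ h
    exact Nat.eq_of_mul_eq_mul_left hm h
  · intro k hk
    simp only [Finset.mem_filter, Finset.mem_Icc] at hk
    obtain ⟨⟨h1, h2⟩, n, rfl⟩ := hk
    refine ⟨n, ?_, rfl⟩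
    have h0 : 0 < n := by
      rcases Nat.eq_zero_or_pos n with h | h
      · subst h; simp at h1
      · exact h
    simp only [Finset.mem_filter, Finset.mem_Icc]
    refine ⟨⟨h0, le_trans (Nat.le_mul_of_pos_left n hm) h2⟩, ?_⟩
    have := (Nat.le_floor_iff (by linarith : (0:ℝ) ≤ x)).1 h2
    push_cast at this; exact this
  · intro n _
    push_cast; rfl

theorem double_sum (x : ℝ) (hx : 1 ≤ x) :
    ∑ m ∈ Finset.Icc 1 ⌊x⌋₊, (ArithmeticFunction.moebius m : ℝ) *
      ∑ n ∈ Finset.Icc 1 ⌊x⌋₊, (if (m:ℝ) * n ≤ x then x - m * n else 0) = x - 1 := by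
  have h1 : ∀ m ∈ Finset.Icc 1 ⌊x⌋₊, (ArithmeticFunction.moebius m : ℝ) *
      ∑ n ∈ Finset.Icc 1 ⌊x⌋₊, (if (m:ℝ) * n ≤ x then x - m * n else 0) =
      ∑ k ∈ Finset.Icc 1 ⌊x⌋₊, if m ∣ k then
        (ArithmeticFunction.moebius m : ℝ) * (x - (k:ℝ)) else 0 := by
    intro m hm
    rw [mob_inner_sum x hx m (Finset.mem_Icc.1 hm).1, Finset.mul_sum]
    simp only [mul_ite, mul_zero]
  rw [Finset.sum_congr rfl h1, Finset.sum_comm]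
  have h2 : ∀ k ∈ Finset.Icc 1 ⌊x⌋₊, (∑ m ∈ Finset.Icc 1 ⌊x⌋₊, if m ∣ k then
        (ArithmeticFunction.moebius m : ℝ) * (x - (k:ℝ)) else 0) =
        if k = 1 then x - 1 else 0 := by
    intro k hk
    rw [Finset.mem_Icc] at hk
    rw [← Finset.sum_filter]
    have : (Finset.Icc 1 ⌊x⌋₊).filter (· ∣ k) = k.divisors := by
      ext d
      simp only [Finset.mem_filter, Finset.mem_Icc, Nat.mem_divisors]
      constructor
      · rintro ⟨_, h⟩; exact ⟨h, by omega⟩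
      · rintro ⟨h, _⟩
        exact ⟨⟨Nat.pos_of_dvd_of_pos h hk.1, (Nat.le_of_dvd hk.1 h).trans hk.2⟩, h⟩
    rw [this, ← Finset.sum_mul, mob_div k hk.1]
    split_ifs with h
    · subst h; simp
    · simp
  rw [Finset.sum_congr rfl h2, Finset.sum_ite_eq' (Finset.Icc 1 ⌊x⌋₊) 1]
  rw [if_pos]
  rw [Finset.mem_Icc]
  exact ⟨le_rfl, Nat.le_floor (by simpa using hx)⟩

/-- `M(t) f(t)` on `[1,x]` as a fixed finite sum of indicators. -/
theorem M_ind (x t : ℝ) (ht : t ∈ Set.Icc 1 x) (f : ℝ → ℝ) :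
    Mobius_M t * f t = ∑ m ∈ Finset.Icc 1 ⌊x⌋₊,
      (ArithmeticFunction.moebius m : ℝ) * (Set.Icc (m:ℝ) x).indicator f t := by
  have h0 : (0:ℝ) ≤ t := by linarith [ht.1]
  have : Finset.Icc 1 ⌊t⌋₊ = (Finset.Icc 1 ⌊x⌋₊).filter (fun m : ℕ => (m:ℝ) ≤ t) := by
    ext m
    simp only [Finset.mem_filter, Finset.mem_Icc, Nat.le_floor_iff h0,
      Nat.le_floor_iff (h0.trans ht.2)]
    constructor
    · rintro ⟨a, b⟩; exact ⟨⟨a, b.trans ht.2⟩, b⟩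
    · rintro ⟨⟨a, _⟩, b⟩; exact ⟨a, b⟩
  rw [Mobius_M, this, Finset.sum_mul, Finset.sum_filter]
  refine Finset.sum_congr rfl fun m _ => ?_
  by_cases h : (m:ℝ) ≤ t
  · rw [if_pos h, Set.indicator_of_mem (show t ∈ Set.Icc (m:ℝ) x from ⟨h, ht.2⟩)]
  · rw [if_neg h, Set.indicator_of_notMem (fun h' => h h'.1), mul_zero]

open MeasureTheory in
theorem M_integrable (x : ℝ) (hx : 1 ≤ x) (f : ℝ → ℝ) (hf : ContinuousOn f (Set.Icc 1 x)) :
    IntervalIntegrable (fun t => Mobius_M t * f t) volume 1 x := by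
  have h : IntervalIntegrable (∑ m ∈ Finset.Icc 1 ⌊x⌋₊, fun t =>
      (ArithmeticFunction.moebius m : ℝ) * (Set.Icc (m:ℝ) x).indicator f t) volume 1 x :=
    IntervalIntegrable.sum _ fun m _ => (ind_int x _ measurableSet_Icc f hf hx).const_mul _
  refine h.congr ?_
  intro t ht
  rw [Set.uIoc_of_le hx] at ht
  simp only [Finset.sum_apply]
  exact (M_ind x t (Set.Ioc_subset_Icc_self ht) f).symm

open MeasureTheory in
theorem m1_int (x : ℝ) (hx : 1 ≤ x) :
    ∫ t in (1:ℝ)..x, Mobius_M t * (1 / t ^ 2) = Mobius_m1 x := by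
  have hf : ContinuousOn (fun t : ℝ => 1 / t ^ 2) (Set.Icc 1 x) := by
    refine ContinuousOn.div continuousOn_const (by fun_prop) fun t ht => ?_
    have := ht.1
    positivity
  rw [intervalIntegral.integral_congr (g := fun t => ∑ m ∈ Finset.Icc 1 ⌊x⌋₊,
      (ArithmeticFunction.moebius m : ℝ) * (Set.Icc (m:ℝ) x).indicator (fun t => 1 / t ^ 2) t)
    (fun t ht => M_ind x t (by rwa [Set.uIcc_of_le hx] at ht) (fun t => 1 / t ^ 2))]
  rw [intervalIntegral.integral_finsetSum
    (fun m _ => (ind_int x _ measurableSet_Icc _ hf hx).const_mul _), Mobius_m1]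
  refine Finset.sum_congr rfl fun m hm => ?_
  rw [Finset.mem_Icc, Nat.le_floor_iff (by linarith)] at hm
  have h1 : (1:ℝ) ≤ m := by exact_mod_cast hm.1
  rw [intervalIntegral.integral_const_mul, ind_eval x m x h1 hm.2 le_rfl]
  congr 1
  have key : ∀ t ∈ Set.uIcc (m:ℝ) x, HasDerivAt (fun t : ℝ => -t⁻¹) (1 / t ^ 2) t := by
    intro t ht
    rw [Set.uIcc_of_le hm.2] at ht
    have : t ≠ 0 := by linarith [ht.1]
    have h := (hasDerivAt_inv this).fun_neg
    rwa [show -(-(t ^ 2)⁻¹) = 1 / t ^ 2 by rw [neg_neg, one_div]] at h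
  rw [intervalIntegral.integral_eq_sub_of_hasDerivAt key]
  · simp only [one_div]; ring
  · apply ContinuousOn.intervalIntegrable
    rw [Set.uIcc_of_le hm.2]
    exact hf.mono (Set.Icc_subset_Icc h1 le_rfl)

/-- `n·[n t ≤ x]·M(t)` as a sum of indicators of intervals. -/
theorem MG_ind (x t : ℝ) (hx : 1 ≤ x) (ht : t ∈ Set.Icc 1 x) :
    Mobius_M t * ((⌊x / t⌋₊ : ℝ) * (⌊x / t⌋₊ + 1)) = ∑ m ∈ Finset.Icc 1 ⌊x⌋₊,
      ∑ n ∈ Finset.Icc 1 ⌊x⌋₊, ((ArithmeticFunction.moebius m : ℝ) * (2 * n)) *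
        (Set.Icc (m:ℝ) (x / n)).indicator (fun _ => (1:ℝ)) t := by
  have h0 : (0:ℝ) < t := by linarith [ht.1]
  have hS : ∀ N : ℕ, ∑ n ∈ Finset.Icc 1 N, (2 * n : ℝ) = N * (N + 1) := by
    intro N
    induction N with
    | zero => simp
    | succ k ih => rw [Finset.sum_Icc_succ_top (by omega), ih]; push_cast; ring
  have hI : Finset.Icc 1 ⌊x / t⌋₊ = (Finset.Icc 1 ⌊x⌋₊).filter (fun n : ℕ => t ≤ x / n) := by
    ext n
    simp only [Finset.mem_filter, Finset.mem_Icc, and_assoc]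
    refine and_congr_right fun hn => ?_
    have hn' : (1:ℝ) ≤ n := by exact_mod_cast hn
    rw [Nat.le_floor_iff (by positivity), Nat.le_floor_iff (by positivity),
      le_div_iff₀ h0, le_div_iff₀ (by positivity)]
    constructor
    · intro h; exact ⟨by nlinarith [ht.1], by linarith⟩
    · rintro ⟨_, h⟩; linarith
  have hM := M_ind x t ht (fun _ => 1)
  rw [mul_one] at hM
  rw [← hS, hI, Finset.sum_filter, hM, Finset.sum_mul_sum]
  refine Finset.sum_congr rfl fun m _ => Finset.sum_congr rfl fun n _ => ?_
  simp only [Set.indicator_apply, Set.mem_Icc]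
  by_cases h1 : (m:ℝ) ≤ t <;> by_cases h2 : t ≤ x / n <;> simp [h1, h2, ht.2]

open MeasureTheory in
theorem MG_integrable (x : ℝ) (hx : 1 ≤ x) :
    IntervalIntegrable (fun t => Mobius_M t * ((⌊x / t⌋₊ : ℝ) * (⌊x / t⌋₊ + 1))) volume 1 x := by
  have h : IntervalIntegrable (∑ m ∈ Finset.Icc 1 ⌊x⌋₊,
      ∑ n ∈ Finset.Icc 1 ⌊x⌋₊, fun t => ((ArithmeticFunction.moebius m : ℝ) * (2 * n)) *
        (Set.Icc (m:ℝ) (x / n)).indicator (fun _ => (1:ℝ)) t) volume 1 x :=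
    IntervalIntegrable.sum _ fun m _ => IntervalIntegrable.sum _ fun n _ =>
      (ind_int x _ measurableSet_Icc _ continuousOn_const hx).const_mul _
  refine h.congr ?_
  intro t ht
  rw [Set.uIoc_of_le hx] at ht
  simp only [Finset.sum_apply]
  exact (MG_ind x t hx (Set.Ioc_subset_Icc_self ht)).symm

open MeasureTheory in
theorem MG_int (x : ℝ) (hx : 1 ≤ x) :
    ∫ t in (1:ℝ)..x, Mobius_M t * ((⌊x / t⌋₊ : ℝ) * (⌊x / t⌋₊ + 1)) = 2 * (x - 1) := by
  rw [intervalIntegral.integral_congr (g := fun t => ∑ m ∈ Finset.Icc 1 ⌊x⌋₊,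
      ∑ n ∈ Finset.Icc 1 ⌊x⌋₊, ((ArithmeticFunction.moebius m : ℝ) * (2 * n)) *
        (Set.Icc (m:ℝ) (x / n)).indicator (fun _ => (1:ℝ)) t)
    (fun t ht => MG_ind x t hx (by rwa [Set.uIcc_of_le hx] at ht))]
  have hi : ∀ m n : ℕ, IntervalIntegrable
      (fun t => ((ArithmeticFunction.moebius m : ℝ) * (2 * n)) *
        (Set.Icc (m:ℝ) (x / n)).indicator (fun _ => (1:ℝ)) t) volume 1 x := fun m n =>
      (ind_int x _ measurableSet_Icc _ continuousOn_const hx).const_mul _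
  rw [intervalIntegral.integral_finsetSum]
  · rw [← double_sum x hx, Finset.mul_sum]
    refine Finset.sum_congr rfl fun m hm => ?_
    rw [intervalIntegral.integral_finsetSum (fun n _ => hi m n), Finset.mul_sum, Finset.mul_sum]
    refine Finset.sum_congr rfl fun n hn => ?_
    rw [Finset.mem_Icc] at hm hn
    have h1 : (1:ℝ) ≤ m := by exact_mod_cast hm.1
    have h2 : (1:ℝ) ≤ n := by exact_mod_cast hn.1
    have h2' : (0:ℝ) < n := by linarith
    rw [intervalIntegral.integral_const_mul]
    split_ifs with h
    · rw [ind_eval x m (x / n) h1 (by rwa [le_div_iff₀ h2'])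
        (div_le_self (by linarith) h2), intervalIntegral.integral_const]
      simp only [smul_eq_mul, mul_one]
      field_simp
    · rw [Set.Icc_eq_empty (by rwa [le_div_iff₀ h2'])]
      simp
  · intro m _
    have := IntervalIntegrable.sum (Finset.Icc 1 ⌊x⌋₊) (fun n _ => hi m n)
    refine this.congr ?_
    intro t _
    simp only [Finset.sum_apply]

theorem kern (x t : ℝ) (h1 : 1 ≤ t) (hx : t ≤ x) :
    |1 / t ^ 2 - (1 / x ^ 2) * ((⌊x / t⌋₊ : ℝ) * (⌊x / t⌋₊ + 1))| ≤ (1 / x) * (1 / t) := by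
  have ht : 0 < t := by linarith
  have hx0 : 0 < x := by linarith
  have hu : 0 ≤ x / t := by positivity
  have ha := Nat.floor_le hu
  have hb := Nat.lt_floor_add_one (x / t)
  set N : ℝ := (⌊x / t⌋₊ : ℝ)
  have hN : 0 ≤ N := Nat.cast_nonneg _
  obtain ⟨u, hu'⟩ : ∃ u, u = x / t := ⟨_, rfl⟩
  rw [← hu'] at ha hb hu
  have e1 : 1 / t ^ 2 - (1 / x ^ 2) * (N * (N + 1)) = (1 / x ^ 2) * (u ^ 2 - N * (N + 1)) := by
    rw [hu']; field_simp
  have e2 : (1 / x) * (1 / t) = (1 / x ^ 2) * u := by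
    rw [hu']; field_simp
  rw [e1, e2, abs_mul, abs_of_nonneg (by positivity : (0:ℝ) ≤ 1 / x ^ 2)]
  refine mul_le_mul_of_nonneg_left ?_ (by positivity)
  rw [abs_le]
  constructor <;> nlinarith

/-- For every real `x ≥ 1`,
`|m₁(x)| ≤ (1/x) ∫_1^x |M(t)|/t dt + 2/x - 2/x²`. -/
theorem m1_bound (x : ℝ) (hx : 1 ≤ x) :
    |Mobius_m1 x| ≤ (1 / x) * (∫ t in (1 : ℝ)..x, |Mobius_M t| / t) + 2 / x - 2 / x ^ 2 := by
  have hx0 : 0 < x := by linarith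
  have hf : ContinuousOn (fun t : ℝ => 1 / t ^ 2) (Set.Icc 1 x) := by
    refine ContinuousOn.div continuousOn_const (by fun_prop) fun t ht => ?_
    have := ht.1
    positivity
  have hg : ContinuousOn (fun t : ℝ => 1 / t) (Set.Icc 1 x) := by
    refine ContinuousOn.div continuousOn_const (by fun_prop) fun t ht => ?_
    have := ht.1
    positivity
  have i1 := M_integrable x hx _ hf
  have i2 := (MG_integrable x hx).const_mul (1 / x ^ 2)
  have i3 := ((M_integrable x hx _ hg).abs).const_mul (1 / x)
  have e := intervalIntegral.integral_sub i1 i2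
  rw [intervalIntegral.integral_const_mul, m1_int x hx, MG_int x hx] at e
  have b := intervalIntegral.norm_integral_le_of_norm_le hx
    (f := fun t => Mobius_M t * (1 / t ^ 2) -
      1 / x ^ 2 * (Mobius_M t * ((⌊x / t⌋₊ : ℝ) * (⌊x / t⌋₊ + 1))))
    (Filter.Eventually.of_forall fun t ht => by
      have k := kern x t ht.1.le ht.2
      have ht0 : 0 < t := by linarith [ht.1]
      show _ ≤ 1 / x * |Mobius_M t * (1 / t)|
      rw [Real.norm_eq_abs, show Mobius_M t * (1 / t ^ 2) -
        1 / x ^ 2 * (Mobius_M t * ((⌊x / t⌋₊ : ℝ) * (⌊x / t⌋₊ + 1))) = Mobius_M t *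
        (1 / t ^ 2 - (1 / x ^ 2) * ((⌊x / t⌋₊ : ℝ) * (⌊x / t⌋₊ + 1))) by ring, abs_mul, abs_mul,
        abs_of_pos (by positivity : 0 < 1 / t)]
      calc _ ≤ |Mobius_M t| * ((1 / x) * (1 / t)) :=
            mul_le_mul_of_nonneg_left k (abs_nonneg _)
        _ = _ := by ring) i3
  rw [e, Real.norm_eq_abs, intervalIntegral.integral_const_mul] at b
  have c : ∫ t in (1:ℝ)..x, |Mobius_M t * (1 / t)| = ∫ t in (1:ℝ)..x, |Mobius_M t| / t := by
    refine intervalIntegral.integral_congr fun t ht => ?_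
    rw [Set.uIcc_of_le hx] at ht
    have ht0 : 0 < t := by linarith [ht.1]
    show |Mobius_M t * (1 / t)| = _
    rw [abs_mul, abs_of_pos (by positivity : 0 < 1 / t), mul_one_div]
  rw [c] at b
  have d : 1 / x ^ 2 * (2 * (x - 1)) = 2 / x - 2 / x ^ 2 := by field_simp
  have d0 : 0 ≤ 1 / x ^ 2 * (2 * (x - 1)) := by
    have : 0 ≤ x - 1 := by linarith
    positivity
  have tri := abs_sub_abs_le_abs_sub (Mobius_m1 x) (1 / x ^ 2 * (2 * (x - 1)))
  rw [abs_of_nonneg d0] at tri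
  linarith
end

section
/- Let α ≥ 0 be a real number such that limsup_{x → ∞} |M(x)/x| ≤ α. Then limsup_{x → ∞} |m(x)| ≤ 2α. -/
open Filter

/-- `m(x) = ∑_{n ≤ x} μ(n)/n`. -/
noncomputable def Mobius_m (x : ℝ) : ℝ :=
  ∑ n ∈ Finset.Icc 1 ⌊x⌋₊, (ArithmeticFunction.moebius n : ℝ) / n

/-- auxiliary kernel -/
noncomputable def auxF (u : ℝ) : ℝ :=
  -u + (2 * (⌊u⌋₊ : ℝ) + 1) - (⌊u⌋₊ : ℝ) * ((⌊u⌋₊ : ℝ) + 1) / u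

lemma auxF_nonneg (u : ℝ) (hu : 1 ≤ u) : 0 ≤ auxF u := by
  have h1 := Nat.floor_le (by linarith : (0:ℝ) ≤ u)
  have h2 := Nat.lt_floor_add_one u
  have h0 : (0:ℝ) < u := by linarith
  have : auxF u = (u - ⌊u⌋₊) * (⌊u⌋₊ + 1 - u) / u := by
    unfold auxF; field_simp; ring
  rw [this]
  exact div_nonneg (mul_nonneg (by linarith) (by linarith)) h0.le

lemma auxF_sub_le (u v : ℝ) (hv : 1 ≤ v) (huv : v ≤ u) : auxF u - auxF v ≤ (u - v) / v := by
  have hu : 1 ≤ u := hv.trans huv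
  have hu0 : (0:ℝ) < u := by linarith
  have hv0 : (0:ℝ) < v := by linarith
  have h1 := Nat.floor_le hu0.le
  have h2 := Nat.lt_floor_add_one u
  have h3 : (1:ℝ) ≤ ⌊u⌋₊ := by exact_mod_cast Nat.le_floor (by simpa using hu)
  by_cases hk : (⌊u⌋₊ : ℝ) ≤ v
  · have e : ⌊v⌋₊ = ⌊u⌋₊ := by
      rw [Nat.floor_eq_iff hv0.le]; exact ⟨hk, by linarith⟩
    unfold auxF
    rw [e]
    set k : ℝ := (⌊u⌋₊ : ℝ)
    have : (u - v) / v - (-u + (2 * k + 1) - k * (k + 1) / u - (-v + (2 * k + 1) - k * (k + 1) / v))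
        = (u - v) * (u * (v + 1) - k * (k + 1)) / (u * v) := by
      field_simp; ring
    have : 0 ≤ (u - v) * (u * (v + 1) - k * (k + 1)) / (u * v) := by
      apply div_nonneg (mul_nonneg (by linarith) _) (by positivity)
      have : k * (k + 1) ≤ u * (v + 1) := by gcongr
      linarith
    linarith
  · push Not at hk
    have hF := auxF_nonneg v hv
    have e : auxF u ≤ u / v - 1 := by
      unfold auxF
      set k : ℝ := (⌊u⌋₊ : ℝ)
      have hk0 : 0 < k := by linarith
      have a : u / k ≤ u / v := by gcongr
      have : u / k - 1 - (-u + (2 * k + 1) - k * (k + 1) / u)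
        = (u - k) * (u * (k + 1) - k * (k + 1)) / (u * k) := by
        field_simp; ring
      have : 0 ≤ (u - k) * (u * (k + 1) - k * (k + 1)) / (u * k) := by
        apply div_nonneg (mul_nonneg (by linarith) _) (by positivity)
        have : k * (k + 1) ≤ u * (k + 1) := by gcongr
        linarith
      linarith
    have : (u - v) / v = u / v - 1 := by field_simp
    linarith

lemma auxF_sub_ge (u v : ℝ) (hv : 1 ≤ v) (huv : v ≤ u) : auxF v - auxF u ≤ (u - v) / v := by
  have hu : 1 ≤ u := hv.trans huv
  have hu0 : (0:ℝ) < u := by linarith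
  have hv0 : (0:ℝ) < v := by linarith
  have h1 := Nat.floor_le hv0.le
  have h2 := Nat.lt_floor_add_one v
  have h3 : (1:ℝ) ≤ ⌊v⌋₊ := by exact_mod_cast Nat.le_floor (by simpa using hv)
  by_cases hk : u < (⌊v⌋₊ : ℝ) + 1
  · have e : ⌊u⌋₊ = ⌊v⌋₊ := by
      rw [Nat.floor_eq_iff hu0.le]; exact ⟨by linarith, hk⟩
    unfold auxF
    rw [e]
    set k : ℝ := (⌊v⌋₊ : ℝ)
    have : (u - v) / v - ((-v + (2 * k + 1) - k * (k + 1) / v) - (-u + (2 * k + 1) - k * (k + 1) / u))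
        = (u - v) * (k * (k + 1) - (v - 1) * u) / (u * v) := by
      field_simp; ring
    have : 0 ≤ (u - v) * (k * (k + 1) - (v - 1) * u) / (u * v) := by
      apply div_nonneg (mul_nonneg (by linarith) _) (by positivity)
      have : (v - 1) * u ≤ k * (k + 1) := by
        apply mul_le_mul <;> linarith
      linarith
    linarith
  · push Not at hk
    have hF := auxF_nonneg u hu
    have e : auxF v ≤ u / v - 1 := by
      unfold auxF
      set k : ℝ := (⌊v⌋₊ : ℝ)
      have a : (k + 1) / v ≤ u / v := by gcongr
      have : (k + 1) / v - 1 - (-v + (2 * k + 1) - k * (k + 1) / v)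
        = (k + 1 - v) * (k + 1 - v) / v := by
        field_simp; ring
      have : (k + 1 - v) * (k + 1 - v) / v ≥ 0 := by
        apply div_nonneg (mul_self_nonneg _) hv0.le
      have : (k + 1 - v) * (k + 1 - v) / v ≥ 0 := this
      linarith
    have : (u - v) / v = u / v - 1 := by field_simp
    linarith

lemma auxF_step (N n : ℕ) (hn : 1 ≤ n) (hN : n + 1 ≤ N) :
    |auxF ((N:ℝ) / n) - auxF ((N:ℝ) / (n + 1 : ℕ))| ≤ 1 / n := by
  have hn' : (0:ℝ) < n := by exact_mod_cast hn
  have hN' : ((n + 1 : ℕ):ℝ) ≤ N := by exact_mod_cast hN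
  have hn1 : (0:ℝ) < (n + 1 : ℕ) := by positivity
  have hN0 : (0:ℝ) < N := by linarith
  have hv : 1 ≤ (N:ℝ) / (n + 1 : ℕ) := by rw [le_div_iff₀ hn1]; linarith
  have huv : (N:ℝ) / (n + 1 : ℕ) ≤ (N:ℝ) / n := by gcongr; simp
  have e : ((N:ℝ) / n - (N:ℝ) / (n + 1 : ℕ)) / ((N:ℝ) / (n + 1 : ℕ)) = 1 / n := by
    push_cast; field_simp; ring
  have a := auxF_sub_le _ _ hv huv
  have b := auxF_sub_ge _ _ hv huv
  rw [e] at a b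
  rw [abs_le]; constructor <;> linarith

lemma abs_mu_le (n : ℕ) : |(ArithmeticFunction.moebius n : ℝ)| ≤ 1 := by
  exact_mod_cast ArithmeticFunction.abs_moebius_le_one

lemma aux_M_le (n : ℕ) : |Mobius_M n| ≤ n := by
  unfold Mobius_M
  rw [Nat.floor_natCast]
  refine (Finset.abs_sum_le_sum_abs _ _).trans ?_
  refine (Finset.sum_le_sum (fun i _ => abs_mu_le i)).trans ?_
  simp

lemma aux_abel (f : ℕ → ℝ) (K : ℕ) (hK : 1 ≤ K) :
    ∑ n ∈ Finset.Icc 1 K, (ArithmeticFunction.moebius n : ℝ) * f n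
      = Mobius_M K * f K + ∑ n ∈ Finset.Ico 1 K, Mobius_M n * (f n - f (n + 1)) := by
  induction K, hK using Nat.le_induction with
  | base => simp [Mobius_M]
  | succ K hK ih =>
    have e : Mobius_M (K + 1 : ℕ) = Mobius_M K + (ArithmeticFunction.moebius (K + 1) : ℝ) := by
      unfold Mobius_M
      rw [Nat.floor_natCast, Nat.floor_natCast, Finset.sum_Icc_succ_top (by omega)]
    rw [Finset.sum_Icc_succ_top (by omega), ih, Finset.sum_Ico_succ_top hK, e]
    ring

lemma aux_sum_mu (m : ℕ) (hm : m ≠ 0) :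
    ∑ d ∈ m.divisors, (ArithmeticFunction.moebius d : ℝ) = if m = 1 then 1 else 0 := by
  have := ArithmeticFunction.coe_mul_zeta_apply (f := ArithmeticFunction.moebius) (x := m)
  rw [ArithmeticFunction.moebius_mul_coe_zeta, ArithmeticFunction.one_apply] at this
  have h2 := congrArg (fun z : ℤ => (z : ℝ)) this.symm
  push_cast at h2
  exact h2

lemma aux_conv (g : ℕ → ℝ) (N : ℕ) (hN : 1 ≤ N) :
    ∑ n ∈ Finset.Icc 1 N, (ArithmeticFunction.moebius n : ℝ) *
      ∑ k ∈ Finset.Icc 1 (N / n), g (n * k) = g 1 := by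
  have h1 : ∑ m ∈ Finset.Icc 1 N, ∑ d ∈ m.divisors, (ArithmeticFunction.moebius d : ℝ) * g m
      = g 1 := by
    have : ∀ m ∈ Finset.Icc 1 N, ∑ d ∈ m.divisors, (ArithmeticFunction.moebius d : ℝ) * g m
      = if m = 1 then g 1 else 0 := by
      intro m hm
      rw [Finset.mem_Icc] at hm
      rw [← Finset.sum_mul, aux_sum_mu m (by omega)]
      split_ifs with h <;> simp [h]
    rw [Finset.sum_congr rfl this]
    simp [hN]
  rw [← h1]
  simp_rw [Finset.mul_sum]
  rw [Finset.sum_sigma', Finset.sum_sigma']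
  refine Finset.sum_bij' (fun p _ => ⟨p.1 * p.2, p.1⟩) (fun p _ => ⟨p.2, p.1 / p.2⟩) ?_ ?_ ?_ ?_ ?_
  · rintro ⟨n, k⟩ h
    simp only [Finset.mem_sigma, Finset.mem_Icc, Nat.mem_divisors] at h ⊢
    obtain ⟨⟨a, b⟩, c, d⟩ := h
    have : k * n ≤ N := (Nat.le_div_iff_mul_le a).1 d
    refine ⟨⟨Nat.mul_pos a c, by linarith⟩, Dvd.intro _ rfl, (Nat.mul_pos a c).ne'⟩
  · rintro ⟨m, d⟩ h
    simp only [Finset.mem_sigma, Finset.mem_Icc, Nat.mem_divisors] at h ⊢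
    obtain ⟨⟨a, b⟩, c, _⟩ := h
    have hd := Nat.pos_of_dvd_of_pos c a
    exact ⟨⟨hd, (Nat.le_of_dvd a c).trans b⟩, Nat.div_pos (Nat.le_of_dvd a c) hd,
      Nat.div_le_div_right b⟩
  · rintro ⟨n, k⟩ h
    simp only [Finset.mem_sigma, Finset.mem_Icc] at h
    simp [Nat.mul_div_cancel_left k h.1.1]
  · rintro ⟨m, d⟩ h
    simp only [Finset.mem_sigma, Finset.mem_Icc, Nat.mem_divisors] at h
    simp [Nat.mul_div_cancel' h.2.1]
  · rintro ⟨n, k⟩ h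
    rfl

lemma aux_tri (q : ℕ) : ∑ k ∈ Finset.Icc 1 q, (k : ℝ) = q * (q + 1) / 2 := by
  induction q with
  | zero => simp
  | succ q ih => rw [Finset.sum_Icc_succ_top (by omega), ih]; push_cast; ring

lemma aux_identity (N : ℕ) (hN : 1 ≤ N) :
    ∑ n ∈ Finset.Icc 1 N, (ArithmeticFunction.moebius n : ℝ) * auxF ((N:ℝ) / n)
      = -(N * Mobius_m N) + 2 + Mobius_M N - 2 / N := by
  have c1 := aux_conv (fun _ => 1) N hN
  have c2 := aux_conv (fun m => (m : ℝ)) N hN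
  simp only [Finset.sum_const, Nat.card_Icc, nsmul_eq_mul, mul_one, Nat.add_sub_cancel] at c1
  simp only [Nat.cast_mul, ← Finset.mul_sum, aux_tri, Nat.cast_one] at c2
  have hN0 : (N:ℝ) ≠ 0 := by positivity
  have e : ∀ n ∈ Finset.Icc 1 N, (ArithmeticFunction.moebius n : ℝ) * auxF ((N:ℝ) / n) =
      -(N * ((ArithmeticFunction.moebius n : ℝ) / n))
      + 2 * ((ArithmeticFunction.moebius n : ℝ) * (N / n : ℕ)) + (ArithmeticFunction.moebius n : ℝ)
      - 2 / N * ((ArithmeticFunction.moebius n : ℝ) *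
        (n * (((N / n : ℕ) : ℝ) * ((N / n : ℕ) + 1) / 2))) := by
    intro n hn
    have : (n:ℝ) ≠ 0 := by
      have := (Finset.mem_Icc.1 hn).1
      positivity
    unfold auxF
    rw [Nat.floor_div_eq_div]
    field_simp
    ring
  rw [Finset.sum_congr rfl e, Finset.sum_sub_distrib, Finset.sum_add_distrib,
    Finset.sum_add_distrib, Finset.sum_neg_distrib, ← Finset.mul_sum, ← Finset.mul_sum,
    ← Finset.mul_sum, c1, c2]
  unfold Mobius_m Mobius_M
  rw [Nat.floor_natCast]
  ring

lemma aux_bound (N : ℕ) (hN : 1 ≤ N) :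
    N * |Mobius_m N| ≤ 2 + |Mobius_M N| + ∑ n ∈ Finset.Ico 1 N, |Mobius_M n| / n := by
  have h1 := aux_identity N hN
  rw [aux_abel (fun n => auxF ((N:ℝ) / n)) N hN] at h1
  have hN1 : (1:ℝ) ≤ N := by exact_mod_cast hN
  have hN0 : (N:ℝ) ≠ 0 := by positivity
  have hF1 : auxF ((N:ℝ) / N) = 0 := by
    rw [div_self hN0]; unfold auxF; norm_num
  simp only [hF1, mul_zero, zero_add] at h1
  have h2 : |∑ n ∈ Finset.Ico 1 N, Mobius_M n * (auxF ((N:ℝ) / n) - auxF ((N:ℝ) / (n + 1 : ℕ)))|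
      ≤ ∑ n ∈ Finset.Ico 1 N, |Mobius_M n| / n := by
    refine (Finset.abs_sum_le_sum_abs _ _).trans (Finset.sum_le_sum fun n hn => ?_)
    rw [Finset.mem_Ico] at hn
    rw [abs_mul, div_eq_mul_one_div |Mobius_M n|]
    exact mul_le_mul_of_nonneg_left (auxF_step N n hn.1 hn.2) (abs_nonneg _)
  rw [h1] at h2
  have h3 : (0:ℝ) ≤ 2 / N := by positivity
  have h4 : 2 / (N:ℝ) ≤ 2 := div_le_self (by norm_num) hN1
  have h5 : (N:ℝ) * |Mobius_m N| = |N * Mobius_m N| := by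
    rw [abs_mul, Nat.abs_cast]
  rw [h5]
  have := abs_le.1 h2
  have := neg_abs_le (Mobius_M N)
  have := le_abs_self (Mobius_M N)
  rw [abs_le]
  constructor <;> linarith

lemma aux_nat_bound (a : ℝ) (ha : 0 ≤ a) (n0 : ℕ) (h : ∀ n : ℕ, n0 ≤ n → |Mobius_M n| ≤ a * n)
    (N : ℕ) (hN : 1 ≤ N) (hN0 : n0 ≤ N) :
    |Mobius_m N| ≤ 2 * a + (2 + n0) / N := by
  have hp : (0:ℝ) < N := by exact_mod_cast hN
  have h2 : ∑ n ∈ Finset.Ico 1 N, |Mobius_M n| / n ≤ n0 + a * N := by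
    have : ∀ n ∈ Finset.Ico 1 N, |Mobius_M n| / n ≤ (if n < n0 then 1 else 0) + a := by
      intro n hn
      rw [Finset.mem_Ico] at hn
      have hn0 : (0:ℝ) < n := by exact_mod_cast hn.1
      rw [div_le_iff₀ hn0]
      split_ifs with hc
      · have := aux_M_le n
        nlinarith
      · have := h n (by omega)
        linarith
    refine (Finset.sum_le_sum this).trans ?_
    rw [Finset.sum_add_distrib, Finset.sum_ite, Finset.sum_const, Finset.sum_const_zero,
      Finset.sum_const, nsmul_eq_mul, nsmul_eq_mul, Nat.card_Ico]
    have c : ((Finset.Ico 1 N).filter (fun n => n < n0)).card ≤ n0 := by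
      calc _ ≤ (Finset.range n0).card := Finset.card_le_card (by
              intro n; simp)
        _ = n0 := by simp
    have c' : (((Finset.Ico 1 N).filter (fun n => n < n0)).card : ℝ) ≤ n0 := by exact_mod_cast c
    have d : ((N - 1 : ℕ) : ℝ) ≤ N := by exact_mod_cast Nat.sub_le _ _
    have := mul_le_mul_of_nonneg_right d ha
    linarith
  have h1 := aux_bound N hN
  have h3 := h N hN0
  have : |Mobius_m N| ≤ (2 + a * N + (n0 + a * N)) / N := by
    rw [le_div_iff₀ hp]; linarith
  refine this.trans (le_of_eq ?_)
  field_simp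
  ring

/-- If `limsup_{x→∞} |M(x)/x| ≤ α` then `limsup_{x→∞} |m(x)| ≤ 2α`. -/
theorem limsup_m_le (α : ℝ) (hα : 0 ≤ α)
    (h : limsup (fun x : ℝ => |Mobius_M x / x|) atTop ≤ α) :
    limsup (fun x : ℝ => |Mobius_m x|) atTop ≤ 2 * α := by
  refine le_of_forall_pos_le_add fun ε hε => ?_
  have hb : IsBoundedUnder (· ≤ ·) atTop (fun x : ℝ => |Mobius_M x / x|) := by
    refine isBoundedUnder_of_eventually_le (a := 1) ?_
    filter_upwards [eventually_gt_atTop 0] with x hx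
    rw [abs_div, abs_of_pos hx, div_le_one hx]
    have e : Mobius_M x = Mobius_M (⌊x⌋₊ : ℝ) := by simp [Mobius_M]
    rw [e]
    exact (aux_M_le _).trans (Nat.floor_le hx.le)
  have h1 := eventually_lt_of_limsup_lt (lt_of_le_of_lt h (by linarith : α < α + ε / 4)) hb
  have h2 := (tendsto_natCast_atTop_atTop (R := ℝ)).eventually h1
  obtain ⟨n0, hn0⟩ := eventually_atTop.1 h2
  have key := aux_nat_bound (α + ε / 4) (by positivity) (n0 + 1) (fun n hn => by
    have a := hn0 n (by omega)
    have hp : (0:ℝ) < n := by exact_mod_cast (by omega : 0 < n)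
    rw [abs_div, abs_of_pos hp, div_lt_iff₀ hp] at a
    exact a.le)
  have ht : Tendsto (fun N : ℕ => (2 + ((n0 + 1 : ℕ) : ℝ)) / N) atTop (nhds 0) :=
    tendsto_const_div_atTop_nhds_zero_nat _
  have h3 := (tendsto_nat_floor_atTop (α := ℝ)).eventually
    ((ht.eventually_lt_const (by linarith : 0 < ε / 2)).and (eventually_ge_atTop (n0 + 1)))
  refine limsup_le_of_le (IsCoboundedUnder.of_frequently_ge (a := 0)
    (Frequently.of_forall fun x => abs_nonneg _)) ?_
  filter_upwards [h3] with x hx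
  have e : Mobius_m x = Mobius_m (⌊x⌋₊ : ℝ) := by simp [Mobius_m]
  rw [e]
  have := key ⌊x⌋₊ (by omega) hx.2
  linarith [hx.1]
end

section
/- Let α ≥ 0 be a real number such that limsup_{x → ∞} |M(x)/x| ≤ α. Then limsup_{x → ∞} |m₁(x)| ≤ (271/360 − γ) α, where γ is the Euler–Mascheroni constant. -/
open Filter

/-- Weighted Möbius inversion over a hyperbolic region. -/
lemma moebius_sum_sum (f : ℕ → ℝ) (N : ℕ) (hN : 1 ≤ N) :
    ∑ m ∈ Finset.Icc 1 N, (ArithmeticFunction.moebius m : ℝ) *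
      ∑ n ∈ Finset.Icc 1 (N / m), f (m * n) = f 1 := by
  have key : ∀ k ∈ Finset.Icc 1 N,
      ∑ x ∈ k.divisorsAntidiagonal, (ArithmeticFunction.moebius x.1 : ℝ) = if k = 1 then 1 else 0 := by
    intro k hk
    have h1 := congrArg (fun F : ArithmeticFunction ℝ => F k)
      (ArithmeticFunction.coe_moebius_mul_coe_zeta (R := ℝ))
    simp only [ArithmeticFunction.mul_apply, ArithmeticFunction.one_apply] at h1
    rw [← h1]
    refine Finset.sum_congr rfl fun x hx => ?_
    have : x.2 ≠ 0 := by
      rintro h0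
      simp [h0] at hx
      omega
    simp [ArithmeticFunction.zeta_apply, this]
  have h2 : ∑ m ∈ Finset.Icc 1 N, (ArithmeticFunction.moebius m : ℝ) *
      ∑ n ∈ Finset.Icc 1 (N / m), f (m * n) =
      ∑ k ∈ Finset.Icc 1 N, ∑ x ∈ k.divisorsAntidiagonal,
        (ArithmeticFunction.moebius x.1 : ℝ) * f k := by
    simp_rw [Finset.mul_sum]
    rw [Finset.sum_sigma', Finset.sum_sigma']
    refine Finset.sum_bij' (fun p _ => ⟨p.1 * p.2, (p.1, p.2)⟩) (fun q _ => ⟨q.2.1, q.2.2⟩)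
      ?_ ?_ ?_ ?_ ?_
    · rintro ⟨a, b⟩ h
      simp only [Finset.mem_sigma, Finset.mem_Icc, Nat.mem_divisorsAntidiagonal] at h ⊢
      obtain ⟨⟨h1, h2⟩, h3, h4⟩ := h
      rw [Nat.le_div_iff_mul_le (by omega)] at h4
      have : 0 < a * b := Nat.mul_pos (by omega) (by omega)
      refine ⟨⟨this, by linarith [mul_comm a b]⟩, by trivial, by omega⟩
    · rintro ⟨k, a, b⟩ h
      simp only [Finset.mem_sigma, Finset.mem_Icc, Nat.mem_divisorsAntidiagonal] at h ⊢
      obtain ⟨⟨h1, h2⟩, h3, h4⟩ := h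
      have ha : 0 < a := Nat.pos_of_ne_zero (by rintro rfl; simp at h3; omega)
      have hb : 0 < b := Nat.pos_of_ne_zero (by rintro rfl; simp at h3; omega)
      refine ⟨⟨ha, by nlinarith⟩, hb, ?_⟩
      rw [Nat.le_div_iff_mul_le ha]
      linarith [mul_comm a b]
    · rintro ⟨a, b⟩ h; rfl
    · rintro ⟨k, a, b⟩ h
      simp only [Finset.mem_sigma, Finset.mem_Icc, Nat.mem_divisorsAntidiagonal] at h ⊢
      obtain ⟨_, rfl, _⟩ := h
      rfl
    · rintro ⟨a, b⟩ h; rfl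
  rw [h2]
  simp_rw [← Finset.sum_mul]
  rw [Finset.sum_congr rfl (fun k hk => by rw [key k hk])]
  simp [hN]

open MeasureTheory Set

/-- The non-negative kernel `(1 - N(N+1)/t²)²`, `N = ⌊t⌋`. -/
noncomputable def gker (t : ℝ) : ℝ := (1 - (⌊t⌋₊ : ℝ) * (⌊t⌋₊ + 1) / t ^ 2) ^ 2

lemma gker_nonneg (t : ℝ) : 0 ≤ gker t := sq_nonneg _

lemma gker_le {t : ℝ} (ht : 1 ≤ t) : gker t ≤ 4 / t ^ 2 := by
  unfold gker
  have h1 := Nat.floor_le (show 0 ≤ t by linarith)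
  have h2 := Nat.lt_floor_add_one t
  set N : ℝ := (⌊t⌋₊ : ℝ)
  have e : (4 : ℝ) / t ^ 2 = (2 / t) ^ 2 := by ring
  rw [e]
  apply sq_le_sq'
  · rw [neg_le_iff_add_nonneg]
    have : 1 - N * (N + 1) / t ^ 2 + 2 / t = (t ^ 2 - N * (N + 1) + 2 * t) / t ^ 2 := by
      field_simp
    rw [this]
    apply div_nonneg _ (by positivity)
    nlinarith
  · have : 2 / t - (1 - N * (N + 1) / t ^ 2) = (2 * t - t ^ 2 + N * (N + 1)) / t ^ 2 := by
      field_simp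
      ring
    have h3 : 0 ≤ (2 * t - t ^ 2 + N * (N + 1)) / t ^ 2 := by
      apply div_nonneg _ (by positivity)
      nlinarith
    linarith

lemma sum_id_cube (N : ℕ) : ∑ n ∈ Finset.Icc 1 N, (n : ℝ) = N * (N + 1) / 2 ∧
    ∑ n ∈ Finset.Icc 1 N, (n : ℝ) ^ 3 = (N * (N + 1) / 2) ^ 2 := by
  induction N with
  | zero => simp
  | succ k ih =>
    rw [Finset.sum_Icc_succ_top (by omega), Finset.sum_Icc_succ_top (by omega), ih.1, ih.2]
    push_cast
    constructor <;> ring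

/-- Expansion of the kernel as a sum over `n ≤ t`. -/
lemma gker_eq {t : ℝ} {K : ℕ} (ht : 1 ≤ t) (hK : ⌊t⌋₊ ≤ K) :
    gker t = 1 - ∑ n ∈ Finset.Icc 1 K,
      (Ici (n : ℝ)).indicator (fun t => 4 * n / t ^ 2 - 4 * n ^ 3 / t ^ 4) t := by
  have h1 : ∑ n ∈ Finset.Icc 1 K,
      (Ici (n : ℝ)).indicator (fun t => 4 * n / t ^ 2 - 4 * n ^ 3 / t ^ 4) t =
      ∑ n ∈ Finset.Icc 1 ⌊t⌋₊, (4 * (n : ℝ) / t ^ 2 - 4 * n ^ 3 / t ^ 4) := by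
    symm
    rw [← Finset.sum_subset (Finset.Icc_subset_Icc_right hK)]
    · refine Finset.sum_congr rfl fun n hn => ?_
      rw [Finset.mem_Icc] at hn
      rw [indicator_of_mem]
      exact (Nat.le_floor_iff (by linarith)).1 hn.2
    · intro n hn hn2
      rw [indicator_of_notMem]
      intro h
      rw [Finset.mem_Icc] at hn hn2
      exact hn2 ⟨hn.1, Nat.le_floor h⟩
  rw [h1, Finset.sum_sub_distrib, ← Finset.sum_div, ← Finset.sum_div, ← Finset.mul_sum,
    ← Finset.mul_sum, (sum_id_cube _).1, (sum_id_cube _).2, gker]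
  have : t ≠ 0 := by linarith
  field_simp
  ring

/-- Integrals of sums of truncated functions. -/
lemma integral_trunc (f : ℕ → ℝ → ℝ) (hf : ∀ n, ContinuousOn (f n) (Ioi 0)) (f0 : ℝ → ℝ)
    (hf0 : ContinuousOn f0 (Ioi 0)) (y : ℝ) (K : ℕ) :
    IntegrableOn (fun t => f0 t - ∑ n ∈ Finset.Icc 1 K, (Ici (n : ℝ)).indicator (f n) t) (Icc 1 y) ∧
    ∫ t in Icc 1 y, (f0 t - ∑ n ∈ Finset.Icc 1 K, (Ici (n : ℝ)).indicator (f n) t) =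
      (∫ t in Icc 1 y, f0 t) - ∑ n ∈ Finset.Icc 1 K, ∫ t in Icc (n : ℝ) y, f n t := by
  have hs : Icc (1 : ℝ) y ⊆ Ioi 0 := fun t ht => lt_of_lt_of_le one_pos ht.1
  have i0 : IntegrableOn f0 (Icc 1 y) := (hf0.mono hs).integrableOn_Icc
  have i1 : ∀ n : ℕ, IntegrableOn ((Ici (n : ℝ)).indicator (f n)) (Icc 1 y) := fun n =>
    ((hf n).mono hs).integrableOn_Icc.indicator measurableSet_Ici
  have i2 : IntegrableOn (fun t => ∑ n ∈ Finset.Icc 1 K, (Ici (n : ℝ)).indicator (f n) t)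
      (Icc 1 y) := integrable_finsetSum _ fun n _ => i1 n
  refine ⟨i0.sub i2, ?_⟩
  rw [integral_sub i0 i2, integral_finsetSum _ fun n _ => i1 n]
  congr 1
  refine Finset.sum_congr rfl fun n hn => ?_
  rw [setIntegral_indicator measurableSet_Ici]
  congr 2
  ext t
  have : (1 : ℝ) ≤ n := by exact_mod_cast (Finset.mem_Icc.1 hn).1
  simp only [mem_inter_iff, mem_Icc, mem_Ici]
  constructor
  · rintro ⟨⟨_, h⟩, h'⟩; exact ⟨h', h⟩
  · rintro ⟨h, h'⟩; exact ⟨⟨this.trans h, h'⟩, h⟩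

lemma ftc_Icc {F f : ℝ → ℝ} {a b : ℝ} (ha : 0 < a) (hab : a ≤ b)
    (hF : ∀ t, 0 < t → HasDerivAt F (f t) t) (hf : ContinuousOn f (Ioi 0)) :
    ∫ t in Icc a b, f t = F b - F a := by
  rw [integral_Icc_eq_integral_Ioc, ← intervalIntegral.integral_of_le hab]
  have hs : uIcc a b ⊆ Ioi 0 := by
    rw [uIcc_of_le hab]; exact fun t ht => lt_of_lt_of_le ha ht.1
  exact intervalIntegral.integral_eq_sub_of_hasDerivAt (fun t ht => hF t (hs ht))
    (hf.mono hs).intervalIntegrable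

noncomputable def Bfun (y : ℝ) : ℝ := 4 * (1 - 1 / y) - 4 / 3 * (1 - 1 / y ^ 3)

lemma hasDerivAt_inv_pow (k : ℕ) (t : ℝ) (ht : 0 < t) :
    HasDerivAt (fun t : ℝ => 1 / t ^ (k + 1)) (-(k + 1) / t ^ (k + 2)) t := by
  have := (hasDerivAt_pow (k + 1) t).inv (by positivity)
  convert! this using 1
  · ext; simp
  · push_cast
    field_simp
    simp
    try ring

lemma gker_integrable (y : ℝ) : IntegrableOn gker (Icc 1 y) := by
  have h := (integral_trunc (fun n t => 4 * n / t ^ 2 - 4 * n ^ 3 / t ^ 4)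
    (fun n t ht => ContinuousAt.continuousWithinAt (by
      have : t ≠ 0 := ne_of_gt ht
      fun_prop (disch := positivity))) (fun _ => 1) continuousOn_const y ⌊y⌋₊).1
  refine h.congr_fun (fun t ht => (gker_eq ht.1 (Nat.floor_le_floor ht.2)).symm) measurableSet_Icc

lemma integral_gker {y : ℝ} (hy : 1 ≤ y) :
    ∫ t in Icc 1 y, gker t = y - 1 - ∑ n ∈ Finset.Icc 1 ⌊y⌋₊, Bfun (y / n) := by
  have hc : ∀ n : ℕ, ContinuousOn (fun t : ℝ => 4 * (n : ℝ) / t ^ 2 - 4 * n ^ 3 / t ^ 4) (Ioi 0) :=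
    (fun n t ht => ContinuousAt.continuousWithinAt (by
      have : t ≠ 0 := ne_of_gt ht
      fun_prop (disch := positivity)))
  have h := (integral_trunc (fun n t => 4 * n / t ^ 2 - 4 * n ^ 3 / t ^ 4) hc
    (fun _ => 1) continuousOn_const y ⌊y⌋₊).2
  rw [setIntegral_congr_fun measurableSet_Icc
    (fun t ht => gker_eq ht.1 (Nat.floor_le_floor ht.2)), h]
  congr 1
  · simp [hy]
  · refine Finset.sum_congr rfl fun n hn => ?_
    rw [Finset.mem_Icc] at hn
    have hn0 : (0 : ℝ) < n := by exact_mod_cast hn.1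
    have hny : (n : ℝ) ≤ y := (Nat.le_floor_iff (by linarith)).1 hn.2
    rw [ftc_Icc (F := fun t => -(4 * (n : ℝ)) * (1 / t ^ (0 + 1)) + 4 / 3 * n ^ 3 * (1 / t ^ (2 + 1)))
      hn0 hny (fun t ht => ?_) (hc n)]
    · unfold Bfun
      field_simp
      ring
    · convert! ((hasDerivAt_inv_pow 0 t ht).const_mul (-(4 * (n : ℝ)))).add
        ((hasDerivAt_inv_pow 2 t ht).const_mul (4 / 3 * (n : ℝ) ^ 3)) using 1
      push_cast
      ring

lemma integral_gker_div {N : ℕ} (hN : 1 ≤ N) :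
    ∫ t in Icc 1 (N : ℝ), gker t / t =
      Real.log N - harmonic N + (N + 1) / N - ((N + 1) / N) ^ 2 / 4 := by
  have hN1 : (1 : ℝ) ≤ N := by exact_mod_cast hN
  have hc : ∀ n : ℕ, ContinuousOn (fun t : ℝ => 4 * (n : ℝ) / t ^ 3 - 4 * n ^ 3 / t ^ 5) (Ioi 0) :=
    (fun n t ht => ContinuousAt.continuousWithinAt (by
      have : t ≠ 0 := ne_of_gt ht
      fun_prop (disch := positivity)))
  have hc0 : ContinuousOn (fun t : ℝ => t⁻¹) (Ioi 0) :=
    (fun t ht => ContinuousAt.continuousWithinAt (by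
      have : t ≠ 0 := ne_of_gt ht
      fun_prop (disch := positivity)))
  have h := (integral_trunc (fun n t => 4 * n / t ^ 3 - 4 * n ^ 3 / t ^ 5) hc
    (fun t => t⁻¹) hc0 N N).2
  have e : ∀ t ∈ Icc 1 (N : ℝ), gker t / t = t⁻¹ - ∑ n ∈ Finset.Icc 1 N,
      (Ici (n : ℝ)).indicator (fun t => 4 * n / t ^ 3 - 4 * n ^ 3 / t ^ 5) t := by
    intro t ht
    have ht0 : t ≠ 0 := by linarith [ht.1]
    rw [gker_eq ht.1 (K := N) (by simpa using Nat.floor_le_floor ht.2), sub_div, Finset.sum_div, one_div]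
    congr 1
    refine Finset.sum_congr rfl fun n hn => ?_
    unfold indicator
    split_ifs
    · field_simp
    · simp
  rw [setIntegral_congr_fun measurableSet_Icc e, h,
    ftc_Icc one_pos hN1 (fun t ht => Real.hasDerivAt_log ht.ne') hc0]
  have e2 : ∀ n ∈ Finset.Icc 1 N, ∫ t in Icc (n : ℝ) N, (4 * (n : ℝ) / t ^ 3 - 4 * n ^ 3 / t ^ 5) =
      (n : ℝ)⁻¹ - 2 * n / N ^ 2 + n ^ 3 / N ^ 4 := by
    intro n hn
    rw [Finset.mem_Icc] at hn
    have hn0 : (0 : ℝ) < n := by exact_mod_cast hn.1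
    have hny : (n : ℝ) ≤ N := by exact_mod_cast hn.2
    rw [ftc_Icc (F := fun t => -(2 * (n : ℝ)) * (1 / t ^ (1 + 1)) + n ^ 3 * (1 / t ^ (3 + 1)))
      hn0 hny (fun t ht => ?_) (hc n)]
    · field_simp
      ring
    · convert! ((hasDerivAt_inv_pow 1 t ht).const_mul (-(2 * (n : ℝ)))).add
        ((hasDerivAt_inv_pow 3 t ht).const_mul ((n : ℝ) ^ 3)) using 1
      push_cast
      ring
  rw [Finset.sum_congr rfl e2, Finset.sum_add_distrib, Finset.sum_sub_distrib, ← Finset.sum_div,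
    ← Finset.sum_div, ← Finset.mul_sum, (sum_id_cube _).1, (sum_id_cube _).2,
    harmonic_eq_sum_Icc]
  push_cast
  simp only [Real.log_one]
  field_simp
  ring

lemma gker_div_integrable (y : ℝ) : IntegrableOn (fun t => gker t / t) (Icc 1 y) := by
  have h : ContinuousOn (fun t : ℝ => t⁻¹) (Icc 1 y) :=
    (fun t ht => ContinuousAt.continuousWithinAt (by
      have : t ≠ 0 := by linarith [ht.1]
      fun_prop (disch := positivity)))
  exact (gker_integrable y).mul_continuousOn h isCompact_Icc

lemma integral_gker_div_le (x : ℝ) :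
    ∫ t in Icc 1 x, gker t / t ≤ 3 / 4 - Real.eulerMascheroniConstant := by
  have hlim : Tendsto (fun N : ℕ => Real.log N - harmonic N + ((N : ℝ) + 1) / N
      - (((N : ℝ) + 1) / N) ^ 2 / 4) atTop (nhds (3 / 4 - Real.eulerMascheroniConstant)) := by
    have h1 : Tendsto (fun N : ℕ => ((N : ℝ) + 1) / N) atTop (nhds 1) := by
      have h0 : Tendsto (fun N : ℕ => 1 + 1 / (N : ℝ)) atTop (nhds (1 + 0)) :=
        tendsto_const_nhds.add tendsto_one_div_atTop_nhds_zero_nat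
      rw [add_zero] at h0
      refine h0.congr' ?_
      filter_upwards [eventually_ge_atTop 1] with N hN
      have : (0 : ℝ) < N := by exact_mod_cast hN
      field_simp
    have h2 := ((Real.tendsto_harmonic_sub_log.neg).add h1).sub ((h1.pow 2).div_const 4)
    refine (h2.congr fun N => ?_).trans_eq ?_
    · ring
    · congr 1; ring
  refine ge_of_tendsto hlim ?_
  filter_upwards [eventually_ge_atTop (max 1 ⌈x⌉₊)] with N hN
  have hN1 : 1 ≤ N := le_trans (le_max_left _ _) hN
  have hNx : x ≤ N := (Nat.le_ceil x).trans (by exact_mod_cast le_trans (le_max_right _ _) hN)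
  rw [← integral_gker_div hN1]
  refine setIntegral_mono_set (gker_div_integrable _) ?_ (Icc_subset_Icc_right hNx).eventuallyLE
  filter_upwards [ae_restrict_mem measurableSet_Icc] with t ht
  exact div_nonneg (gker_nonneg t) (by linarith [ht.1])

lemma integral_gker_le (x : ℝ) (hx : 1 ≤ x) : ∫ t in Icc 1 x, gker t ≤ 4 := by
  have hc : ContinuousOn (fun t : ℝ => 4 / t ^ 2) (Ioi 0) :=
    (fun t ht => ContinuousAt.continuousWithinAt (by
      have : t ≠ 0 := ne_of_gt ht
      fun_prop (disch := positivity)))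
  calc ∫ t in Icc 1 x, gker t ≤ ∫ t in Icc 1 x, 4 / t ^ 2 :=
        setIntegral_mono_on (gker_integrable x)
          (hc.mono fun t ht => lt_of_lt_of_le one_pos ht.1).integrableOn_Icc measurableSet_Icc
          (fun t ht => gker_le ht.1)
    _ = -4 * (1 / x ^ (0 + 1)) - -4 * (1 / 1 ^ (0 + 1)) := by
        refine ftc_Icc (F := fun t => -4 * (1 / t ^ (0 + 1))) one_pos hx (fun t ht => ?_) hc
        convert! (hasDerivAt_inv_pow 0 t ht).const_mul (-4) using 1
        push_cast
        ring
    _ ≤ 4 := by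
        have : 0 < 1 / x ^ (0 + 1) := by positivity
        linarith

/-- The main identity. -/
lemma main_identity {x : ℝ} (hx : 1 ≤ x) :
    IntegrableOn (fun t => Mobius_M (x / t) * gker t) (Icc 1 x) ∧
    x * Mobius_m1 x - Bfun x = ∫ t in Icc 1 x, Mobius_M (x / t) * gker t := by
  have hx0 : x ≠ 0 := by linarith
  have e : ∀ t ∈ Icc 1 x, Mobius_M (x / t) * gker t = ∑ m ∈ Finset.Icc 1 ⌊x⌋₊,
      (ArithmeticFunction.moebius m : ℝ) * (Iic (x / m)).indicator gker t := by
    intro t ht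
    have ht0 : 0 < t := by linarith [ht.1]
    unfold Mobius_M
    rw [Finset.sum_mul]
    rw [← Finset.sum_subset (Finset.Icc_subset_Icc_right
      (Nat.floor_le_floor (div_le_self (by linarith) ht.1) : ⌊x / t⌋₊ ≤ ⌊x⌋₊))]
    · refine Finset.sum_congr rfl fun m hm => ?_
      rw [Finset.mem_Icc] at hm
      have hm0 : (0 : ℝ) < m := by exact_mod_cast hm.1
      have := (Nat.le_floor_iff (by positivity)).1 hm.2
      rw [indicator_of_mem]
      rw [mem_Iic, le_div_iff₀ hm0]
      rw [le_div_iff₀ ht0] at this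
      linarith
    · intro m hm hm2
      rw [indicator_of_notMem, mul_zero]
      intro h
      rw [Finset.mem_Icc] at hm hm2
      have hm0 : (0 : ℝ) < m := by exact_mod_cast hm.1
      rw [mem_Iic, le_div_iff₀ hm0] at h
      refine hm2 ⟨hm.1, Nat.le_floor ?_⟩
      rw [le_div_iff₀ ht0]
      linarith
  have i1 : ∀ m : ℕ, IntegrableOn (fun t => (ArithmeticFunction.moebius m : ℝ) *
      (Iic (x / m)).indicator gker t) (Icc 1 x) := fun m =>
    ((gker_integrable x).indicator measurableSet_Iic).const_mul _
  refine ⟨IntegrableOn.congr_fun (integrable_finsetSum (Finset.Icc 1 ⌊x⌋₊) fun m _ => i1 m)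
    (fun t ht => (e t ht).symm) measurableSet_Icc, ?_⟩
  rw [setIntegral_congr_fun measurableSet_Icc e, integral_finsetSum _ fun m _ => i1 m]
  have e2 : ∀ m ∈ Finset.Icc 1 ⌊x⌋₊, ∫ t in Icc 1 x, (ArithmeticFunction.moebius m : ℝ) *
      (Iic (x / m)).indicator gker t = x * ((ArithmeticFunction.moebius m : ℝ) * (1 / m - 1 / x)) -
      (ArithmeticFunction.moebius m : ℝ) * ∑ n ∈ Finset.Icc 1 (⌊x⌋₊ / m),
        Bfun (x / (m * n : ℕ)) := by
    intro m hm
    rw [Finset.mem_Icc] at hm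
    have hm0 : (0 : ℝ) < m := by exact_mod_cast hm.1
    have hm1 : (1 : ℝ) ≤ m := by exact_mod_cast hm.1
    have hmx : (m : ℝ) ≤ x := (Nat.le_floor_iff (by linarith)).1 hm.2
    rw [integral_const_mul, setIntegral_indicator measurableSet_Iic]
    have : Icc 1 x ∩ Iic (x / m) = Icc 1 (x / m) := by
      ext t
      simp only [mem_inter_iff, mem_Icc, mem_Iic]
      constructor
      · rintro ⟨⟨h, _⟩, h'⟩; exact ⟨h, h'⟩
      · rintro ⟨h, h'⟩; exact ⟨⟨h, h'.trans (div_le_self (by linarith) hm1)⟩, h'⟩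
    rw [this, integral_gker ((one_le_div hm0).2 hmx), Nat.floor_div_natCast]
    push_cast
    simp_rw [div_div]
    field_simp
  rw [Finset.sum_congr rfl e2, Finset.sum_sub_distrib,
    moebius_sum_sum (fun k => Bfun (x / k)) ⌊x⌋₊ (Nat.one_le_floor_iff _ |>.2 hx), ← Finset.mul_sum]
  simp [Mobius_m1]

lemma abs_M_le {x : ℝ} (hx : 0 ≤ x) : |Mobius_M x| ≤ x := by
  unfold Mobius_M
  refine (Finset.abs_sum_le_sum_abs _ _).trans ?_
  calc _ ≤ ∑ n ∈ Finset.Icc 1 ⌊x⌋₊, (1 : ℝ) := Finset.sum_le_sum fun n _ => by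
        exact_mod_cast ArithmeticFunction.abs_moebius_le_one
    _ = ⌊x⌋₊ := by simp
    _ ≤ x := Nat.floor_le hx

lemma m1_bound_s10 {β C : ℝ} (hM : ∀ y, 0 ≤ y → |Mobius_M y| ≤ β * y + C) (hβ : 0 ≤ β) (hC : 0 ≤ C)
    {x : ℝ} (hx : 1 ≤ x) :
    |Mobius_m1 x| ≤ β * (3 / 4 - Real.eulerMascheroniConstant) + (6 + 4 * C) / x := by
  have hx0 : 0 < x := by linarith
  obtain ⟨hi, h⟩ := main_identity hx
  have h1 : |∫ t in Icc 1 x, Mobius_M (x / t) * gker t| ≤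
      ∫ t in Icc 1 x, (β * x * (gker t / t) + C * gker t) := by
    refine (abs_integral_le_integral_abs).trans ?_
    refine setIntegral_mono_on hi.abs (((gker_div_integrable x).const_mul _).add
      ((gker_integrable x).const_mul _)) measurableSet_Icc fun t ht => ?_
    rw [abs_mul, abs_of_nonneg (gker_nonneg t)]
    have ht0 : 0 < t := by linarith [ht.1]
    calc _ ≤ (β * (x / t) + C) * gker t :=
          mul_le_mul_of_nonneg_right (hM _ (by positivity)) (gker_nonneg t)
      _ = _ := by ring
  rw [integral_add ((gker_div_integrable x).const_mul _) ((gker_integrable x).const_mul _),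
    integral_const_mul, integral_const_mul] at h1
  have h2 := mul_le_mul_of_nonneg_left (integral_gker_div_le x) (show 0 ≤ β * x by positivity)
  have h3 := mul_le_mul_of_nonneg_left (integral_gker_le x hx) hC
  have hB : |Bfun x| ≤ 6 := by
    unfold Bfun
    have a1 : 0 < 1 / x := by positivity
    have a2 : 1 / x ≤ 1 := by rw [div_le_one hx0]; exact hx
    have a3 : 0 < 1 / x ^ 3 := by positivity
    have a4 : 1 / x ^ 3 ≤ 1 := by rw [div_le_one (by positivity)]; exact one_le_pow₀ hx
    rw [abs_le]
    constructor <;> linarith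
  have h4 : x * |Mobius_m1 x| ≤ β * x * (3 / 4 - Real.eulerMascheroniConstant) + (6 + 4 * C) := by
    have : x * |Mobius_m1 x| = |Bfun x + ∫ t in Icc 1 x, Mobius_M (x / t) * gker t| := by
      rw [← h, ← abs_of_pos hx0, ← abs_mul, abs_of_pos hx0]
      congr 1
      ring
    rw [this]
    refine (abs_add_le _ _).trans ?_
    linarith
  rw [mul_comm, ← le_div_iff₀ hx0] at h4
  refine h4.trans_eq ?_
  field_simp

/-- If `limsup_{x→∞} |M(x)/x| ≤ α` then
`limsup_{x→∞} |m₁(x)| ≤ (271/360 - γ) α`. -/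
theorem limsup_m1_le (α : ℝ) (hα : 0 ≤ α)
    (h : limsup (fun x : ℝ => |Mobius_M x / x|) atTop ≤ α) :
    limsup (fun x : ℝ => |Mobius_m1 x|) atTop
      ≤ (271 / 360 - Real.eulerMascheroniConstant) * α := by
  have hγ := Real.eulerMascheroniConstant_lt_two_thirds
  have hγ' := Real.one_half_lt_eulerMascheroniConstant
  have hbdd : IsBoundedUnder (· ≤ ·) atTop (fun x : ℝ => |Mobius_M x / x|) := by
    refine ⟨1, ?_⟩
    rw [eventually_map]
    filter_upwards [eventually_gt_atTop 0] with x hx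
    rw [abs_div, abs_of_pos hx, div_le_one hx]
    exact abs_M_le hx.le
  refine le_of_forall_pos_le_add fun ε hε => ?_
  have hev := eventually_lt_of_limsup_lt (h.trans_lt (show α < α + ε by linarith)) hbdd
  obtain ⟨y0, hy0⟩ := eventually_atTop.1 hev
  have hM : ∀ y, 0 ≤ y → |Mobius_M y| ≤ (α + ε) * y + max y0 0 := by
    intro y hy
    rcases le_or_gt y0 y with h1 | h1
    · rcases hy.eq_or_lt with rfl | hy1
      · have := abs_M_le le_rfl
        simpa using this.trans (le_max_right y0 0)
      · have h2 := (hy0 y h1).le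
        rw [abs_div, abs_of_pos hy1, div_le_iff₀ hy1] at h2
        linarith [le_max_right y0 0]
    · have := abs_M_le hy
      have h3 : 0 ≤ (α + ε) * y := by positivity
      linarith [le_max_left y0 0]
  have hlim : Tendsto (fun x : ℝ => (6 + 4 * max y0 0) / x) atTop (nhds 0) :=
    tendsto_const_nhds.div_atTop tendsto_id
  have hsmall := hlim.eventually_lt_const (show (0 : ℝ) < ε / 4 by linarith)
  refine limsup_le_of_le ?_ ?_
  · exact IsCoboundedUnder.of_frequently_ge (a := 0)
      (Eventually.of_forall fun x => abs_nonneg _).frequently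
  filter_upwards [hsmall, eventually_ge_atTop 1] with x h1 hx
  have h2 := m1_bound_s10 hM (by positivity) (le_max_right _ _) hx
  nlinarith
end

section
/- For every positive integer k, there exist positive real constants C_k and D_k such that for all real x > 0, |m₁(x)| ≤ C_k x^{1−k} ∫_1^x |M(t)| t^{k−3} dt + D_k/x. (Here m₁(x) = 0 for 0 < x < 1.) -/
open FourierTransform
open scoped ContDiff

lemma sum_moebius_hyper (X : ℕ) (hX : 1 ≤ X) (φ : ℕ → ℝ) (hφ : ∀ N, X < N → φ N = 0) :
    ∑ n ∈ Finset.Icc 1 X, (ArithmeticFunction.moebius n : ℝ) * ∑ m ∈ Finset.Icc 1 X, φ (n * m)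
      = φ 1 := by
  have h1 : ∀ n ∈ Finset.Icc 1 X, ∑ m ∈ Finset.Icc 1 X, φ (n * m)
      = ∑ N ∈ Finset.Icc 1 X, if n ∣ N then φ N else 0 := by
    intro n hn
    rw [Finset.mem_Icc] at hn
    rw [← Finset.sum_filter]
    symm
    apply Finset.sum_of_injOn (fun N => N / n)
    · intro a ha b hb hab
      simp only [Finset.coe_filter, Finset.mem_Icc, Set.mem_ofPred_eq] at ha hb
      exact (Nat.div_left_inj ha.2 hb.2).1 hab
    · intro a ha
      simp only [Finset.coe_filter, Finset.mem_Icc, Set.mem_ofPred_eq] at ha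
      simp only [Finset.coe_Icc, Set.mem_Icc]
      exact ⟨Nat.div_pos (Nat.le_of_dvd (by omega) ha.2) (by omega),
        (Nat.div_le_self _ _).trans ha.1.2⟩
    · intro m hm hm'
      apply hφ
      by_contra hlt
      apply hm'
      rw [Finset.mem_Icc] at hm
      refine ⟨n * m, ?_, ?_⟩
      · simp only [Finset.coe_filter, Finset.mem_Icc, Set.mem_ofPred_eq]
        exact ⟨⟨Nat.mul_pos (by omega) (by omega), by omega⟩, Nat.dvd_mul_right _ _⟩
      · exact Nat.mul_div_cancel_left _ (by omega)
    · intro a ha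
      simp only [Finset.mem_filter] at ha
      rw [Nat.mul_div_cancel' ha.2]
  rw [Finset.sum_congr rfl (fun n hn => by rw [h1 n hn])]
  simp_rw [Finset.mul_sum]
  rw [Finset.sum_comm]
  have h2 : ∀ N ∈ Finset.Icc 1 X, ∑ n ∈ Finset.Icc 1 X,
      (ArithmeticFunction.moebius n : ℝ) * (if n ∣ N then φ N else 0)
      = if N = 1 then φ N else 0 := by
    intro N hN
    rw [Finset.mem_Icc] at hN
    have h3 : ∑ d ∈ N.divisors, ArithmeticFunction.moebius d = if N = 1 then 1 else 0 := by
      rw [← ArithmeticFunction.coe_mul_zeta_apply, ArithmeticFunction.moebius_mul_coe_zeta,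
        ArithmeticFunction.one_apply]
    have h4 : (Finset.Icc 1 X).filter (· ∣ N) = N.divisors := by
      ext d
      simp only [Finset.mem_filter, Finset.mem_Icc, Nat.mem_divisors]
      constructor
      · rintro ⟨_, h⟩; exact ⟨h, by omega⟩
      · rintro ⟨h, _⟩
        have := Nat.le_of_dvd (by omega) h
        have := Nat.pos_of_dvd_of_pos h (by omega)
        exact ⟨⟨this, by omega⟩, h⟩
    simp_rw [mul_ite, mul_zero]
    rw [← Finset.sum_filter, h4, ← Finset.sum_mul]
    have h5 := congrArg (Int.cast : ℤ → ℝ) h3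
    push_cast at h5
    rw [h5]
    split_ifs <;> simp
  rw [Finset.sum_congr rfl h2, Finset.sum_ite_eq' ]
  simp [hX]

lemma fourier_scale (g : ℝ → ℂ) (y : ℝ) (hy : 0 < y) (w : ℝ) :
    𝓕 (fun u => g (u / y)) w = y * 𝓕 g (y * w) := by
  rw [Real.fourier_real_eq, Real.fourier_real_eq]
  have := MeasureTheory.Measure.integral_comp_div (fun v => 𝐞 (-(v * (y * w))) • g v) y
  rw [abs_of_pos hy, Complex.real_smul] at this
  rw [← this]
  congr 1
  ext v
  congr 3
  field_simp

lemma poisson_bound (g : ℝ → ℝ) (hg : ContDiff ℝ ∞ g) (hc : HasCompactSupport g) (N : ℕ) :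
    ∃ C : ℝ, 0 < C ∧ ∀ y : ℝ, 1 ≤ y → |∑' m : ℤ, g (m / y) - y * ∫ u, g u| ≤ C * (1 / y) ^ N := by
  have hgC : ContDiff ℝ ∞ (fun u => (g u : ℂ)) := Complex.ofRealCLM.contDiff.comp hg
  have hcC : HasCompactSupport (fun u => (g u : ℂ)) := hc.comp_left (g := fun x : ℝ => (x : ℂ)) rfl
  obtain ⟨D, hD, hD'⟩ := (𝓕 (hcC.toSchwartzMap hgC)).decay (N + 2) 0
  have hsum : Summable (fun n : ℤ => 1 / (n : ℝ) ^ 2) := Real.summable_one_div_int_pow.2 (by norm_num)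
  refine ⟨D * (1 + ∑' n : ℤ, 1 / (n : ℝ) ^ 2), ?_, ?_⟩
  · have : 0 ≤ ∑' n : ℤ, 1 / (n : ℝ) ^ 2 := tsum_nonneg (fun n => by positivity)
    positivity
  intro y hy
  have hy0 : 0 < y := by linarith
  simp only [norm_iteratedFDeriv_zero, SchwartzMap.fourier_coe] at hD'
  have hcoe : ((hcC.toSchwartzMap hgC : SchwartzMap ℝ ℂ) : ℝ → ℂ) = fun u => (g u : ℂ) := rfl
  rw [hcoe] at hD'
  have hgy : ContDiff ℝ ∞ (fun u => (g (u / y) : ℂ)) := hgC.comp (contDiff_id.div_const y)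
  have hcy : HasCompactSupport (fun u => (g (u / y) : ℂ)) := by
    have := hcC.comp_homeomorph (Homeomorph.mulRight₀ (y⁻¹) (by positivity))
    simpa [Function.comp_def, div_eq_mul_inv] using this
  have hP := (hcy.toSchwartzMap hgy).tsum_eq_tsum_fourier 0
  simp only [SchwartzMap.fourier_coe] at hP
  have hcoe2 : ((hcy.toSchwartzMap hgy : SchwartzMap ℝ ℂ) : ℝ → ℂ) = fun u => (g (u / y) : ℂ) := rfl
  rw [hcoe2] at hP
  have hsc := fourier_scale (fun u => (g u : ℂ)) y hy0
  have h0 : 𝓕 (fun u => (g u : ℂ)) 0 = ((∫ u, g u : ℝ) : ℂ) := by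
    rw [Real.fourier_real_eq]
    simp only [mul_zero, neg_zero, AddChar.map_zero_eq_one, one_smul]
    exact integral_ofReal
  have hb : ∀ n : ℤ, ‖(if n = 0 then 0 else (y : ℂ) * 𝓕 (fun u => (g u : ℂ)) (y * n))‖
      ≤ D * (1 / y) ^ N * (1 / (n : ℝ) ^ 2) := by
    intro n
    split_ifs with hn
    · simp [hn]
    · have h1 := hD' (y * n)
      have hn1 : (1 : ℝ) ≤ |(n : ℝ)| := by exact_mod_cast Int.one_le_abs hn
      rw [norm_mul, Complex.norm_real, Real.norm_of_nonneg hy0.le]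
      rw [Real.norm_eq_abs, abs_mul, abs_of_pos hy0] at h1
      have hA := norm_nonneg (𝓕 (fun u => (g u : ℂ)) (y * n))
      set A := ‖𝓕 (fun u => (g u : ℂ)) (y * n)‖
      rw [one_div_pow, mul_one_div, mul_one_div, div_div, le_div_iff₀ (by positivity)]
      refine le_trans ?_ h1
      rw [← sq_abs (n : ℝ)]
      have e1 : (1 : ℝ) ≤ |(n : ℝ)| ^ N := one_le_pow₀ hn1
      have : (y * |(n : ℝ)|) ^ (N + 2) * A
        = (y * A * (y ^ N * |(n : ℝ)| ^ 2)) * (y * |(n : ℝ)| ^ N) := by ring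
      rw [this]
      apply le_mul_of_one_le_right (by positivity)
      nlinarith
  have hsum2 : Summable (fun n : ℤ => D * (1 / y) ^ N * (1 / (n : ℝ) ^ 2)) := hsum.mul_left _
  have hF : ∀ n : ℤ, 𝓕 (fun u => (g (u / y) : ℂ)) n = y * 𝓕 (fun u => (g u : ℂ)) (y * n) :=
    fun n => hsc n
  simp only [zero_add, hF] at hP
  have hP2 : (∑' n : ℤ, (g (n / y) : ℂ)) = ∑' n : ℤ, (y : ℂ) * 𝓕 (fun u => (g u : ℂ)) (y * n) := by
    rw [hP]; congr 1; ext n; simp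
  have hs3 : Summable (fun n : ℤ => (if n = 0 then 0 else (y : ℂ) * 𝓕 (fun u => (g u : ℂ)) (y * n))) :=
    Summable.of_norm_bounded hsum2 hb
  have hs4 : Summable (fun n : ℤ => (y : ℂ) * 𝓕 (fun u => (g u : ℂ)) (y * n)) := by
    refine hs3.congr_cofinite ?_
    filter_upwards [Filter.eventually_cofinite_ne (0 : ℤ)] with n hn
    simp [hn]
  rw [hs4.tsum_eq_add_tsum_ite 0] at hP2
  simp only [Int.cast_zero, mul_zero, h0] at hP2
  have h5 := tsum_of_norm_bounded hsum2.hasSum hb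
  rw [tsum_mul_left] at h5
  rw [← Real.norm_eq_abs, ← Complex.norm_real]
  push_cast
  rw [hP2, add_sub_cancel_left]
  refine h5.trans ?_
  have : (0:ℝ) ≤ (1 / y) ^ N := by positivity
  nlinarith

lemma bump_exists : ∃ φ : ℝ → ℝ, ContDiff ℝ ∞ φ ∧ HasCompactSupport φ ∧ ∫ u, φ u = 1 ∧
    (∀ u, u ≤ 0 ∨ 1 ≤ u → φ u = 0 ∧ deriv φ u = 0) ∧ ∃ B : ℝ, 0 < B ∧ ∀ u, |φ u| ≤ B := by
  let f : ContDiffBump (1 / 2 : ℝ) := ⟨1 / 8, 1 / 4, by norm_num, by norm_num⟩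
  let φ : ℝ → ℝ := f.normed MeasureTheory.volume
  have hcs : HasCompactSupport φ := f.hasCompactSupport_normed
  have hcd : ContDiff ℝ ∞ φ := f.contDiff_normed
  refine ⟨φ, hcd, hcs, f.integral_normed, ?_, ?_⟩
  · intro u hu
    have hts : tsupport φ = Metric.closedBall (1 / 2) (1 / 4) := f.tsupport_normed_eq
    have hnot : u ∉ tsupport φ := by
      rw [hts, Metric.mem_closedBall, Real.dist_eq, abs_le]
      rintro ⟨h1, h2⟩
      rcases hu with h | h <;> linarith
    refine ⟨image_eq_zero_of_notMem_tsupport hnot, ?_⟩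
    by_contra h
    exact hnot (support_deriv_subset h)
  · obtain ⟨B, hB⟩ := hcs.exists_bound_of_continuous hcd.continuous
    exact ⟨max B 1, by positivity, fun u => (hB u).trans (le_max_left _ _)⟩

lemma key_bound (φ : ℝ → ℝ) (hφ : ContDiff ℝ ∞ φ) (hc : HasCompactSupport φ)
    (hi : ∫ u, φ u = 1) (hz : ∀ u, u ≤ 0 ∨ 1 ≤ u → φ u = 0 ∧ deriv φ u = 0) (k : ℕ) :
    ∃ C : ℝ, 0 < C ∧ ∀ x t : ℝ, 1 ≤ t → t ≤ x →
      |∑ m ∈ Finset.Icc 1 ⌊x⌋₊, ((m : ℝ) * t / x) * deriv φ (m * t / x) + x / t|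
        ≤ C * (t / x) ^ k := by
  have hd : ContDiff ℝ ∞ (deriv φ) := (contDiff_infty_iff_deriv.1 hφ).2
  have hg : ContDiff ℝ ∞ (fun u => u * deriv φ u) := contDiff_id.mul hd
  have hgc : HasCompactSupport (fun u => u * deriv φ u) := hc.deriv.mul_left
  have hint : ∫ u, u * deriv φ u = -1 := by
    have := MeasureTheory.integral_mul_deriv_eq_deriv_mul_of_integrable
      (u := fun u : ℝ => u) (v := φ) (u' := fun _ => 1) (v' := deriv φ)
      (fun x _ => hasDerivAt_id x)
      (fun x _ => (hφ.differentiable (by simp) x).hasDerivAt)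
      (hg.continuous.integrable_of_hasCompactSupport hgc)
      ((continuous_const.mul hφ.continuous).integrable_of_hasCompactSupport hc.mul_left)
      ((continuous_id.mul hφ.continuous).integrable_of_hasCompactSupport hc.mul_left)
    rw [this]
    simp [hi]
  obtain ⟨C, hC, hb⟩ := poisson_bound _ hg hgc k
  refine ⟨C, hC, fun x t ht htx => ?_⟩
  have ht0 : 0 < t := by linarith
  have hx0 : 0 < x := by linarith
  have h1 := hb (x / t) ((one_le_div ht0).2 htx)
  rw [hint, one_div_div] at h1
  have h2 : ∑' m : ℤ, ((m : ℝ) / (x / t)) * deriv φ (m / (x / t))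
      = ∑ m ∈ Finset.Icc 1 ⌊x⌋₊, ((m : ℝ) * t / x) * deriv φ (m * t / x) := by
    rw [tsum_eq_sum (s := (Finset.Icc 1 ⌊x⌋₊).map Nat.castEmbedding)]
    · rw [Finset.sum_map]
      simp [div_div_eq_mul_div]
    · intro m hm
      rw [(hz _ _).2, mul_zero]
      rcases le_or_gt m 0 with h | h
      · left
        exact div_nonpos_of_nonpos_of_nonneg (by exact_mod_cast h) (by positivity)
      · right
        have hxm : x < m := by
          by_contra hle
          apply hm
          rw [Finset.mem_map]
          refine ⟨m.toNat, ?_, ?_⟩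
          · rw [Finset.mem_Icc]
            refine ⟨by omega, Nat.le_floor ?_⟩
            have : ((m.toNat : ℤ) : ℝ) = m := by rw [Int.toNat_of_nonneg h.le]
            rw [← Int.cast_natCast, this]
            exact not_lt.1 hle
          · simp [h.le]
        rw [div_div_eq_mul_div, one_le_div hx0]
        nlinarith
  rw [h2] at h1
  convert h1 using 2
  ring

/-- For every positive integer `k`, there exist positive constants `C_k`, `D_k` such
that for all real `x > 0`,
`|m₁(x)| ≤ C_k x^(1-k) ∫_1^x |M(t)| t^(k-3) dt + D_k / x`. -/
theorem m1_general_bound (k : ℕ) (hk : 1 ≤ k) :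
    ∃ C D : ℝ, 0 < C ∧ 0 < D ∧ ∀ x : ℝ, 0 < x →
      |Mobius_m1 x| ≤
        C * x ^ ((1 : ℤ) - k) * (∫ t in (1 : ℝ)..x, |Mobius_M t| * t ^ ((k : ℤ) - 3))
          + D / x := by
  obtain ⟨φ, hφ, hc, hi, hz, B, hB, hBb⟩ := bump_exists
  obtain ⟨C, hC, hkey⟩ := key_bound φ hφ hc hi hz k
  refine ⟨C, B, hC, hB, fun x hx => ?_⟩
  rcases lt_or_ge x 1 with hx1 | hx1
  · have h0 : Mobius_m1 x = 0 := by
      simp [Mobius_m1, Nat.floor_eq_zero.2 hx1]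
    have hI : (∫ t in (1 : ℝ)..x, |Mobius_M t| * t ^ ((k : ℤ) - 3)) = 0 := by
      rw [intervalIntegral.integral_symm, intervalIntegral.integral_of_le hx1.le,
        MeasureTheory.integral_Ioc_eq_integral_Ioo,
        MeasureTheory.setIntegral_eq_zero_of_forall_eq_zero, neg_zero]
      intro t ht
      simp [Mobius_M, Nat.floor_eq_zero.2 ht.2]
    rw [h0, hI]
    simp only [abs_zero, mul_zero, zero_add]
    positivity
  have hX : 1 ≤ ⌊x⌋₊ := (Nat.one_le_floor_iff _).2 hx1
  set X := ⌊x⌋₊ with hXdef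
  have hdiffφ : Differentiable ℝ φ := hφ.differentiable (by simp)
  have hcd : Continuous (deriv φ) := hφ.continuous_deriv (by simp)
  let F : ℝ → ℝ := fun t => x / t - 1 - ∑ m ∈ Finset.Icc 1 X, φ (m * t / x)
  let F' : ℝ → ℝ := fun t => -(x / t ^ 2) - ∑ m ∈ Finset.Icc 1 X, deriv φ (m * t / x) * (m / x)
  have hF : ∀ t, 1 ≤ t → HasDerivAt F (F' t) t := by
    intro t ht
    have ht0 : t ≠ 0 := by positivity
    refine HasDerivAt.sub ?_ (HasDerivAt.fun_sum fun m _ => ?_)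
    · have := ((hasDerivAt_inv ht0).const_mul x).sub_const 1
      convert this using 1
      all_goals ring
    · have h1 : HasDerivAt (fun t : ℝ => (m : ℝ) * t / x) (m / x) t := by
        simpa using ((hasDerivAt_id t).const_mul (m : ℝ)).div_const x
      exact (hdiffφ _).hasDerivAt.comp t h1
  have hF'c : ContinuousOn F' (Set.Icc 1 x) := by
    refine ContinuousOn.sub ?_ (Continuous.continuousOn ?_)
    · refine (ContinuousOn.div continuousOn_const (by fun_prop) ?_).neg
      intro t ht
      have : (0 : ℝ) < t := by linarith [ht.1]
      positivity
    · fun_prop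
  have hdF : Set.EqOn (deriv F) F' (Set.Icc 1 x) := fun t ht => (hF t ht.1).deriv
  have hM : ∀ t, ∑ n ∈ Finset.Icc 0 ⌊t⌋₊, (ArithmeticFunction.moebius n : ℝ) = Mobius_M t := by
    intro t
    rw [Mobius_M, ← Finset.insert_Icc_add_one_left_eq_Icc (Nat.zero_le _), Finset.sum_insert (by simp)]
    simp
  have hAbel := sum_mul_eq_sub_integral_mul₀ (f := F)
    (fun n => (ArithmeticFunction.moebius n : ℝ)) (by simp) x
    (fun t ht => (hF t ht.1).differentiableAt)
    ((hF'c.congr hdF).integrableOn_Icc)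
  have hFx : F x = 0 := by
    have : ∑ m ∈ Finset.Icc 1 X, φ (m * x / x) = 0 := by
      apply Finset.sum_eq_zero
      intro m hm
      refine (hz _ (Or.inr ?_)).1
      rw [mul_div_cancel_right₀ _ hx.ne']
      exact_mod_cast (Finset.mem_Icc.1 hm).1
    simp only [F, this]
    rw [div_self hx.ne']; ring
  rw [hFx, zero_mul, zero_sub] at hAbel
  simp only [hM] at hAbel
  have hL : ∑ n ∈ Finset.Icc 0 ⌊x⌋₊, F n * (ArithmeticFunction.moebius n : ℝ)
      = x * Mobius_m1 x - φ (1 / x) := by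
    have hs := sum_moebius_hyper X hX (fun N => φ (N / x)) (by
      intro N hN
      refine (hz _ (Or.inr ?_)).1
      rw [one_le_div hx]
      exact ((Nat.floor_lt hx.le).1 hN).le)
    simp only [Nat.cast_one] at hs
    rw [← hs, Mobius_m1, Finset.mul_sum, ← Finset.sum_sub_distrib,
      ← Finset.insert_Icc_add_one_left_eq_Icc (Nat.zero_le _), Finset.sum_insert (by simp)]
    simp only [ArithmeticFunction.map_zero, Int.cast_zero, mul_zero, zero_add]
    apply Finset.sum_congr rfl
    intro n hn
    have hn0 : (n : ℝ) ≠ 0 := by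
      have := (Finset.mem_Icc.1 hn).1
      positivity
    have : ∑ m ∈ Finset.Icc 1 X, φ (m * n / x)
        = ∑ m ∈ Finset.Icc 1 X, φ ((n * m : ℕ) / x) := by
      apply Finset.sum_congr rfl
      intro m _
      push_cast
      rw [mul_comm]
    simp only [F, this]
    field_simp
  rw [hL, ← intervalIntegral.integral_of_le hx1] at hAbel
  have hintg : MeasureTheory.IntegrableOn (fun t => |Mobius_M t| * t ^ ((k : ℤ) - 3))
      (Set.Icc 1 x) := by
    have hzc : ContinuousOn (fun t : ℝ => t ^ ((k : ℤ) - 3)) (Set.Icc 1 x) := by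
      intro t ht
      have : (0 : ℝ) < t := by linarith [ht.1]
      exact (continuousAt_zpow₀ t _ (Or.inl this.ne')).continuousWithinAt
    have h1 := integrableOn_mul_sum_Icc (m := 0) (a := 1) (b := x)
      (fun n => (ArithmeticFunction.moebius n : ℝ)) zero_le_one hzc.integrableOn_Icc
    simp only [hM] at h1
    refine MeasureTheory.IntegrableOn.congr_fun h1.norm ?_ measurableSet_Icc
    intro t ht
    have : (0 : ℝ) < t := by linarith [ht.1]
    simp only [norm_mul, Real.norm_eq_abs]
    rw [abs_of_pos (zpow_pos this _), mul_comm]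
  have hbound : |∫ t in Set.Ioc 1 x, deriv F t * Mobius_M t|
      ≤ ∫ t in Set.Ioc 1 x, (C * x ^ ((2 : ℤ) - k)) * (|Mobius_M t| * t ^ ((k : ℤ) - 3)) := by
    rw [← Real.norm_eq_abs]
    apply MeasureTheory.norm_integral_le_of_norm_le
    · exact (hintg.mono_set Set.Ioc_subset_Icc_self).const_mul _
    · refine (MeasureTheory.ae_restrict_iff' measurableSet_Ioc).2 (Filter.Eventually.of_forall ?_)
      intro t ht
      have ht0 : (0 : ℝ) < t := by linarith [ht.1]
      have h1 := hkey x t ht.1.le ht.2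
      have h2 : deriv F t = -(1 / t) *
          (∑ m ∈ Finset.Icc 1 X, ((m : ℝ) * t / x) * deriv φ (m * t / x) + x / t) := by
        rw [hdF ⟨ht.1.le, ht.2⟩]
        simp only [F']
        rw [mul_add, Finset.mul_sum, sub_eq_add_neg, ← Finset.sum_neg_distrib, add_comm]
        congr 1
        · apply Finset.sum_congr rfl
          intro m _
          field_simp
        · field_simp
      rw [norm_mul, Real.norm_eq_abs, Real.norm_eq_abs, h2, abs_mul, abs_neg,
        abs_of_pos (by positivity : 0 < 1 / t)]
      have h3 : 1 / t * (C * (t / x) ^ k) ≤ C * x ^ ((2 : ℤ) - k) * t ^ ((k : ℤ) - 3) := by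
        have e1 : C * x ^ ((2 : ℤ) - k) * t ^ ((k : ℤ) - 3)
            = (1 / t * (C * (t / x) ^ k)) * (x / t) ^ 2 := by
          rw [zpow_sub₀ hx.ne', zpow_sub₀ ht0.ne']
          simp only [zpow_natCast, zpow_ofNat, div_pow]
          field_simp
        rw [e1]
        apply le_mul_of_one_le_right (by positivity)
        exact one_le_pow₀ ((one_le_div ht0).2 ht.2)
      calc _ ≤ (1 / t * (C * (t / x) ^ k)) * |Mobius_M t| := by gcongr
        _ ≤ (C * x ^ ((2 : ℤ) - k) * t ^ ((k : ℤ) - 3)) * |Mobius_M t| := by gcongr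
        _ = _ := by ring
  rw [MeasureTheory.integral_const_mul, ← intervalIntegral.integral_of_le hx1,
    ← intervalIntegral.integral_of_le hx1] at hbound
  set I := ∫ t in (1 : ℝ)..x, |Mobius_M t| * t ^ ((k : ℤ) - 3)
  have hfin : |x * Mobius_m1 x| ≤ C * x ^ ((2 : ℤ) - k) * I + B := by
    have : x * Mobius_m1 x = -(∫ t in (1 : ℝ)..x, deriv F t * Mobius_M t) + φ (1 / x) := by
      linarith
    rw [this]
    refine (abs_add_le _ _).trans ?_
    rw [abs_neg]
    exact add_le_add hbound (hBb _)
  rw [abs_mul, abs_of_pos hx, ← le_div_iff₀' hx] at hfin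
  refine hfin.trans (le_of_eq ?_)
  rw [add_div]
  congr 1
  have : x ^ ((2 : ℤ) - k) = x ^ ((1 : ℤ) - k) * x := by
    rw [← zpow_add_one₀ hx.ne']; congr 1; ring
  rw [this]
  field_simp
end

section
/- For every positive integer k and every integer x ≥ k, the k × k determinant Δ_k(x) = det( C(x+j, 2(i−1)) )_{1 ≤ i, j ≤ k} is nonzero, where C(·,·) denotes the binomial coefficient. In particular Δ_k(2k) ≠ 0. -/
open Polynomial in
theorem sparse_eq_zero (n : ℕ) : ∀ f : ℚ[X], (X + 1) ^ n ∣ f → f.support.card ≤ n → f = 0 := by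
  induction n with
  | zero => 
    intro f _ h
    simpa using h
  | succ n ih =>
    intro f hd hc
    by_contra hf
    obtain ⟨m, hm⟩ : f.support.Nonempty := by simpa using hf
    have hco : ∀ s : ℕ, (X * derivative f - C (m : ℚ) * f).coeff s = ((s : ℚ) - m) * f.coeff s := by
      intro s
      cases s with
      | zero => simp
      | succ s => 
        rw [coeff_sub, coeff_X_mul, coeff_derivative, coeff_C_mul]
        push_cast
        ring
    have h0 : X * derivative f - C (m : ℚ) * f = 0 := by
      apply ih
      · obtain ⟨g, rfl⟩ := hd
        refine ⟨X * (C ((n : ℚ) + 1) * g + (X + 1) * derivative g) - C (m : ℚ) * (X + 1) * g, ?_⟩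
        rw [derivative_mul, derivative_pow]
        simp
        ring
      · have hsub : (X * derivative f - C (m : ℚ) * f).support ⊆ f.support.erase m := by
          intro s hs
          rw [mem_support_iff, hco] at hs
          rw [Finset.mem_erase, mem_support_iff]
          refine ⟨?_, right_ne_zero_of_mul hs⟩
          rintro rfl
          simp at hs
        have := Finset.card_le_card hsub
        rw [Finset.card_erase_of_mem hm] at this
        omega
    have hmon : f = C (f.coeff m) * X ^ m := by
      ext s
      rw [coeff_C_mul_X_pow]
      split_ifs with h
      · rw [h]
      · have := hco s
        rw [h0, coeff_zero] at this
        rcases mul_eq_zero.1 this.symm with h1 | h1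
        · exact absurd (by exact_mod_cast sub_eq_zero.1 h1) h
        · exact h1
    have he : f.eval (-1) = 0 := by
      obtain ⟨g, hg⟩ := hd
      rw [hg]
      simp
    rw [hmon] at he
    rw [mem_support_iff] at hm
    simp [hm] at he


/-- For every positive integer `k` and every integer `x ≥ k`, the `k × k` determinant
`Δ_k(x) = det( C(x+j, 2(i-1)) )_{1 ≤ i,j ≤ k}` is nonzero (as a rational number).
Here the row index `i` and column index `j` range over `1, …, k`; below, `i j : Fin k`
encode `i-1` and `j-1`. In particular `Δ_k(2k) ≠ 0`. -/
theorem delta_det_ne_zero (k : ℕ) (hk : 1 ≤ k) (x : ℕ) (hx : k ≤ x) :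
    Matrix.det (fun i j : Fin k =>
      ((x + ((j : ℕ) + 1)).choose (2 * (i : ℕ)) : ℚ)) ≠ 0 := by
  by_contra hdet
  obtain ⟨v, hv, hMv⟩ := Matrix.exists_mulVec_eq_zero_iff.2 hdet
  let f : Polynomial ℚ := ∑ j : Fin k,
    Polynomial.C (v j) * (Polynomial.X + 1) ^ (x + ((j : ℕ) + 1))
  have hcoeff : ∀ s, f.coeff s = ∑ j : Fin k, v j * ((x + ((j : ℕ) + 1)).choose s : ℚ) := by
    intro s
    simp only [f, Polynomial.finsetSum_coeff, Polynomial.coeff_C_mul,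
      Polynomial.coeff_X_add_one_pow]
  have hf : f = 0 := by
    apply sparse_eq_zero (x + 1)
    · apply Finset.dvd_sum
      intro j _
      exact Dvd.dvd.mul_left (pow_dvd_pow _ (by omega)) _
    · have hsub : f.support ⊆ Finset.range (x + 1 + k) \ (Finset.range k).image (fun i => 2 * i) := by
        intro s hs
        rw [Polynomial.mem_support_iff, hcoeff] at hs
        rw [Finset.mem_sdiff, Finset.mem_range, Finset.mem_image]
        constructor
        · by_contra hlt
          apply hs
          apply Finset.sum_eq_zero
          intro j _
          rw [Nat.choose_eq_zero_of_lt (by omega)]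
          simp
        · rintro ⟨i, hi, rfl⟩
          apply hs
          have := congrFun hMv ⟨i, Finset.mem_range.1 hi⟩
          simp only [Matrix.mulVec, dotProduct, Pi.zero_apply] at this
          rw [← this]
          exact Finset.sum_congr rfl fun j _ => mul_comm _ _
      have h1 := Finset.card_le_card hsub
      rw [Finset.card_sdiff_of_subset, Finset.card_image_of_injective, Finset.card_range,
        Finset.card_range] at h1
      · omega
      · intro a b hab
        simpa using hab
      · intro s hs
        simp only [Finset.mem_image, Finset.mem_range] at hs ⊢
        omega
  apply hv
  funext j
  have h2 : (f.comp (Polynomial.X - 1)).coeff (x + ((j : ℕ) + 1)) = 0 := by simp [hf]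
  simp only [f, Polynomial.sum_comp, Polynomial.mul_comp, Polynomial.C_comp,
    Polynomial.pow_comp, Polynomial.add_comp, Polynomial.X_comp, Polynomial.one_comp,
    sub_add_cancel, Polynomial.finsetSum_coeff, Polynomial.coeff_C_mul_X_pow] at h2
  rw [Finset.sum_eq_single j] at h2
  · simpa using h2
  · intro b _ hb
    rw [if_neg]
    intro h
    exact hb (Fin.ext (by omega))
  · simp
end

section
/- For every real number x ≥ 1, one has −γ ≤ ∑_{n ≤ x} (μ(n)/n) log(x/n) ≤ 2 + γ, where γ is the Euler–Mascheroni constant and the sum is over positive integers n ≤ x. -/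
open ArithmeticFunction in
lemma vm_moebius_sum (m : ℕ) (hm : m ≠ 0) :
    ∑ d ∈ m.divisors, (moebius d : ℝ) = if m = 1 then 1 else 0 := by
  have h := congrArg (fun f : ArithmeticFunction ℤ => f m) moebius_mul_coe_zeta
  simp only [coe_mul_zeta_apply, one_apply] at h
  exact_mod_cast h

open ArithmeticFunction in
lemma vm_identity (N : ℕ) (hN : 1 ≤ N) (g : ℕ → ℝ) :
    ∑ n ∈ Finset.Icc 1 N, ∑ j ∈ Finset.Icc 1 (N / n), (moebius n : ℝ) * g (n * j) = g 1 := by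
  have h1 : ∑ n ∈ Finset.Icc 1 N, ∑ j ∈ Finset.Icc 1 (N / n), (moebius n : ℝ) * g (n * j)
      = ∑ m ∈ Finset.Icc 1 N, ∑ d ∈ m.divisors, (moebius d : ℝ) * g m := by
    rw [Finset.sum_sigma', Finset.sum_sigma']
    refine Finset.sum_nbij' (fun p => ⟨p.1 * p.2, p.1⟩) (fun p => ⟨p.2, p.1 / p.2⟩) ?_ ?_ ?_ ?_ ?_
    · rintro ⟨n, j⟩ h
      simp only [Finset.mem_sigma, Finset.mem_Icc, Nat.mem_divisors] at h ⊢
      obtain ⟨⟨hn, hnN⟩, hj, hjN⟩ := h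
      have : n * j ≤ N := by
        rw [mul_comm]; exact (Nat.le_div_iff_mul_le (by omega)).1 hjN
      have h0 : 0 < n * j := Nat.mul_pos hn hj
      exact ⟨⟨h0, this⟩, dvd_mul_right _ _, h0.ne'⟩
    · rintro ⟨m, d⟩ h
      simp only [Finset.mem_sigma, Finset.mem_Icc, Nat.mem_divisors] at h ⊢
      obtain ⟨⟨hn, hnN⟩, hj, -⟩ := h
      have hd : 0 < d := Nat.pos_of_dvd_of_pos hj hn
      have hdm := Nat.le_of_dvd hn hj
      exact ⟨⟨hd, hdm.trans hnN⟩, Nat.div_pos hdm hd, Nat.div_le_div_right hnN⟩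
    · rintro ⟨n, j⟩ h
      simp only [Finset.mem_sigma, Finset.mem_Icc] at h
      have : n * j / n = j := Nat.mul_div_cancel_left _ (by omega)
      simp [this]
    · rintro ⟨m, d⟩ h
      simp only [Finset.mem_sigma, Finset.mem_Icc, Nat.mem_divisors] at h
      have : d * (m / d) = m := Nat.mul_div_cancel' h.2.1
      simp [this]
    · rintro ⟨n, j⟩ h
      rfl
  rw [h1]
  have h2 : ∀ m ∈ Finset.Icc 1 N, ∑ d ∈ m.divisors, (moebius d : ℝ) * g m
      = if m = 1 then g 1 else 0 := by
    intro m hm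
    rw [← Finset.sum_mul, vm_moebius_sum m (by simp at hm; omega)]
    split_ifs with h <;> simp [h]
  rw [Finset.sum_congr rfl h2]
  simp [hN]

open ArithmeticFunction in
lemma vm_abs_moebius (n : ℕ) : |(moebius n : ℝ)| ≤ 1 := by
  exact_mod_cast abs_moebius_le_one (n := n)

open ArithmeticFunction in
lemma vm_m_bound (N : ℕ) (hN : 1 ≤ N) :
    |∑ n ∈ Finset.Icc 1 N, (moebius n : ℝ) / n| ≤ 1 := by
  have h1 := vm_identity N hN (fun _ => 1)
  simp only [mul_one, Finset.sum_const, Nat.card_Icc, Nat.add_sub_cancel, nsmul_eq_mul] at h1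
  have hN0 : (0 : ℝ) < N := by exact_mod_cast hN
  have key : (N : ℝ) * ∑ n ∈ Finset.Icc 1 N, (moebius n : ℝ) / n
      = 1 + ∑ n ∈ Finset.Icc 1 N, (moebius n : ℝ) * ((N : ℝ) / n - (N / n : ℕ)) := by
    conv_rhs => rw [← h1]
    rw [Finset.mul_sum, ← Finset.sum_add_distrib]
    refine Finset.sum_congr rfl fun n _ => ?_
    ring
  have hb : |∑ n ∈ Finset.Icc 1 N, (moebius n : ℝ) * ((N : ℝ) / n - (N / n : ℕ))| ≤ N - 1 := by
    have hs : ∑ n ∈ Finset.Icc 1 N, (if n = 1 then (0:ℝ) else 1) = N - 1 := by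
      have : ∀ n : ℕ, (if n = 1 then (0:ℝ) else 1) = 1 - if n = 1 then (1:ℝ) else 0 := by
        intro n; split_ifs <;> simp
      simp_rw [this, Finset.sum_sub_distrib]
      simp [hN]
    rw [← hs]
    refine (Finset.abs_sum_le_sum_abs _ _).trans (Finset.sum_le_sum fun n hn => ?_)
    split_ifs with h
    · simp [h]
    · have hn0 : 0 < n := by simp at hn; omega
      have ha : ((N / n : ℕ) : ℝ) ≤ (N : ℝ) / n := Nat.cast_div_le
      have hc : (N : ℝ) / n < (N / n : ℕ) + 1 := by
        rw [div_lt_iff₀ (by exact_mod_cast hn0)]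
        exact_mod_cast Nat.lt_mul_of_div_lt (Nat.lt_succ_self (N / n)) hn0
      rw [abs_mul]
      have hd : |(N : ℝ) / n - (N / n : ℕ)| ≤ 1 := by rw [abs_le]; constructor <;> linarith
      exact mul_le_one₀ (vm_abs_moebius n) (abs_nonneg _) hd
  rw [abs_le] at hb ⊢
  constructor <;> nlinarith [hb.1, hb.2]

lemma vm_harmonic (y : ℝ) (hy : 1 ≤ y) :
    |(harmonic ⌊y⌋₊ : ℝ) - Real.log y - Real.eulerMascheroniConstant| ≤ 1 / y := by
  set N := ⌊y⌋₊ with hN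
  have hy0 : 0 < y := by linarith
  have h1 : (N : ℝ) ≤ y := Nat.floor_le hy0.le
  have h2 : y < N + 1 := Nat.lt_floor_add_one y
  have h3 := Real.eulerMascheroniSeq_lt_eulerMascheroniConstant N
  have h4 := Real.eulerMascheroniConstant_lt_eulerMascheroniSeq' (N + 1)
  simp only [Real.eulerMascheroniSeq] at h3
  simp only [Real.eulerMascheroniSeq', harmonic_succ, Nat.succ_ne_zero, if_false] at h4
  push_cast at h4
  have h5 : Real.log ((N + 1) / y) = Real.log (N + 1) - Real.log y :=
    Real.log_div (by positivity) hy0.ne'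
  have h6 : Real.log ((N + 1) / y) ≤ (N + 1) / y - 1 :=
    Real.log_le_sub_one_of_pos (by positivity)
  have h7 : 0 ≤ Real.log ((N + 1) / y) := Real.log_nonneg (by rw [one_le_div hy0]; exact h2.le)
  have h8 : ((N : ℝ) + 1)⁻¹ ≤ 1 / y := by rw [← one_div]; exact one_div_le_one_div_of_le hy0 h2.le
  have h9 : ((N : ℝ) + 1) / y - 1 ≤ 1 / y := by
    rw [div_sub_one hy0.ne']; gcongr; linarith
  rw [abs_le]
  constructor <;> linarith

/-- **von Mangoldt's encadrement** (1897): for every real `x ≥ 1`,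
`-γ ≤ ∑_{n ≤ x} (μ(n)/n) log(x/n) ≤ 2 + γ`. -/
theorem vonMangoldt_encadrement (x : ℝ) (hx : 1 ≤ x) :
    -Real.eulerMascheroniConstant
        ≤ ∑ n ∈ Finset.Icc 1 ⌊x⌋₊, (ArithmeticFunction.moebius n : ℝ) / n * Real.log (x / n) ∧
      ∑ n ∈ Finset.Icc 1 ⌊x⌋₊, (ArithmeticFunction.moebius n : ℝ) / n * Real.log (x / n)
        ≤ 2 + Real.eulerMascheroniConstant := by
  have hx0 : 0 < x := by linarith
  have hN : 1 ≤ ⌊x⌋₊ := (Nat.one_le_floor_iff x).2 hx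
  have hNx : (⌊x⌋₊ : ℝ) ≤ x := Nat.floor_le hx0.le
  have hid := vm_identity ⌊x⌋₊ hN (fun m => (m : ℝ)⁻¹)
  have hm := vm_m_bound ⌊x⌋₊ hN
  have hγ := Real.one_half_lt_eulerMascheroniConstant
  have hid2 : ∑ n ∈ Finset.Icc 1 ⌊x⌋₊,
      (ArithmeticFunction.moebius n : ℝ) / n * (harmonic ⌊x / n⌋₊ : ℝ) = 1 := by
    rw [Nat.cast_one, inv_one] at hid
    rw [← hid]
    refine Finset.sum_congr rfl fun n _ => ?_
    rw [Nat.floor_div_natCast, harmonic_eq_sum_Icc]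
    push_cast
    rw [Finset.mul_sum]
    refine Finset.sum_congr rfl fun j _ => ?_
    rw [mul_inv]; ring
  have hR : |∑ n ∈ Finset.Icc 1 ⌊x⌋₊, (ArithmeticFunction.moebius n : ℝ) / n *
      ((harmonic ⌊x / n⌋₊ : ℝ) - Real.log (x / n) - Real.eulerMascheroniConstant)| ≤ 1 := by
    calc _ ≤ ∑ n ∈ Finset.Icc 1 ⌊x⌋₊, 1 / x := by
          refine (Finset.abs_sum_le_sum_abs _ _).trans (Finset.sum_le_sum fun n hn => ?_)
          rw [Finset.mem_Icc] at hn
          have hn0 : (0 : ℝ) < n := by exact_mod_cast hn.1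
          have hnx : (n : ℝ) ≤ x := le_trans (by exact_mod_cast hn.2) hNx
          have hr := vm_harmonic (x / n) (by rw [one_le_div hn0]; exact hnx)
          rw [abs_mul, abs_div, abs_of_pos hn0]
          calc _ ≤ 1 / (n : ℝ) * (1 / (x / n)) := by
                gcongr
                exact vm_abs_moebius n
            _ = 1 / x := by field_simp
      _ ≤ 1 := by
          simp only [Finset.sum_const, Nat.card_Icc, Nat.add_sub_cancel, nsmul_eq_mul]
          rw [mul_one_div, div_le_one hx0]; exact hNx
  simp only [mul_sub, Finset.sum_sub_distrib, hid2, ← Finset.sum_mul] at hR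
  rw [abs_le] at hR hm
  constructor <;> nlinarith [hR.1, hR.2, hm.1, hm.2]
end

section
/- Let α > 0 be a real number such that α^{−1} is an integer ≥ 2. Then the map from {0, 1} × ℕ × {k ∈ ℕ : 2 ≤ k ≤ α^{−1}} to the positive integers given by (h, j, k) ↦ ⌊α^{−4−2j}/k⌋ + h is injective. -/
lemma aux_j (m j k j' k' : ℕ) (hm : 2 ≤ m) (hk : 2 ≤ k) (hk' : 2 ≤ k') (hkm' : k' ≤ m)
    (hj : j < j') : m ^ (4 + 2 * j) / k + 2 ≤ m ^ (4 + 2 * j') / k' := by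
  have h1 : m ^ (5 + 2 * j) ≤ m ^ (4 + 2 * j') / k' := by
    rw [Nat.le_div_iff_mul_le (by omega)]
    calc m ^ (5 + 2 * j) * k' ≤ m ^ (5 + 2 * j) * m := Nat.mul_le_mul_left _ hkm'
      _ = m ^ (5 + 2 * j + 1) := (pow_succ _ _).symm
      _ ≤ _ := Nat.pow_le_pow_right (by omega) (by omega)
  have h2 : m ^ (4 + 2 * j) / k ≤ m ^ (4 + 2 * j) := Nat.div_le_self _ _
  have h3 : m ^ (5 + 2 * j) = m ^ (4 + 2 * j) * m := by
    rw [← pow_succ]; congr 1; omega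
  have h4 : 2 ^ 1 ≤ m ^ (4 + 2 * j) :=
    (Nat.pow_le_pow_left hm 1).trans (Nat.pow_le_pow_right (by omega) (by omega))
  nlinarith

lemma aux_k (m j k k' : ℕ) (hm : 2 ≤ m) (hk : 2 ≤ k) (hkm' : k' ≤ m)
    (hkk : k < k') : m ^ (4 + 2 * j) / k' + 2 ≤ m ^ (4 + 2 * j) / k := by
  have hN : 4 * k * k' ≤ m ^ (4 + 2 * j) := by
    calc 4 * k * k' ≤ (m * m) * m * m := by gcongr <;> nlinarith
      _ = m ^ 4 := by ring
      _ ≤ _ := Nat.pow_le_pow_right (by omega) (by omega)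
  generalize m ^ (4 + 2 * j) = N at *
  have hq : 4 * k ≤ N / k' := by rwa [Nat.le_div_iff_mul_le (by omega)]
  have hq2 : N / k' * k' ≤ N := Nat.div_mul_le_self _ _
  rw [Nat.le_div_iff_mul_le (by omega)]
  generalize N / k' = q at *
  nlinarith

lemma aux_floor (α : ℝ) (m : ℕ) (h : (m : ℝ) = α⁻¹) (j k : ℕ) :
    ⌊α ^ (-4 - 2 * (j : ℤ)) / (k : ℝ)⌋ = ((m ^ (4 + 2 * j) / k : ℕ) : ℤ) := by
  have : α ^ (-4 - 2 * (j : ℤ)) = ((m ^ (4 + 2 * j) : ℕ) : ℝ) := by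
    push_cast
    rw [h, inv_pow, ← zpow_natCast, ← zpow_neg]
    congr 1; push_cast; ring
  rw [this, ← Int.natCast_floor_eq_floor (by positivity), Nat.floor_div_eq_div]

/-- Let `α > 0` with `α⁻¹` an integer `≥ 2`. Then the map
`(h, j, k) ↦ ⌊α^(-4-2j)/k⌋ + h`, defined on `{0,1} × ℕ × {k : 2 ≤ k ≤ α⁻¹}`,
is injective. -/
theorem floor_map_injective (α : ℝ) (hα : 0 < α)
    (hint : ∃ m : ℤ, 2 ≤ m ∧ (m : ℝ) = α⁻¹) :
    ∀ h j k h' j' k' : ℕ,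
      h ≤ 1 → h' ≤ 1 →
      2 ≤ k → (k : ℝ) ≤ α⁻¹ → 2 ≤ k' → (k' : ℝ) ≤ α⁻¹ →
      ⌊α ^ (-4 - 2 * (j : ℤ)) / k⌋ + (h : ℤ) = ⌊α ^ (-4 - 2 * (j' : ℤ)) / k'⌋ + (h' : ℤ) →
      (h, j, k) = (h', j', k') := by
  intro h j k h' j' k' hh hh' hk hkm hk' hkm' e
  obtain ⟨m, hm, hmα⟩ := hint
  lift m to ℕ using by omega
  have hmα' : (m : ℝ) = α⁻¹ := by exact_mod_cast hmα
  have hm2 : 2 ≤ m := by exact_mod_cast hm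
  rw [← hmα'] at hkm hkm'
  have hkm : k ≤ m := by exact_mod_cast hkm
  have hkm' : k' ≤ m := by exact_mod_cast hkm'
  rw [aux_floor α m hmα', aux_floor α m hmα'] at e
  have e : m ^ (4 + 2 * j) / k + h = m ^ (4 + 2 * j') / k' + h' := by exact_mod_cast e
  rcases lt_trichotomy j j' with hj | hj | hj
  · have := aux_j m j k j' k' hm2 hk hk' hkm' hj
    omega
  · subst hj
    rcases lt_trichotomy k k' with hkk | hkk | hkk
    · have := aux_k m j k k' hm2 hk hkm' hkk
      omega
    · subst hkk
      have : h = h' := by omega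
      rw [this]
    · have := aux_k m j k' k hm2 hk' hkm hkk
      omega
  · have := aux_j m j' k' j k hm2 hk' hk hkm hj
    omega
end
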